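/- arXiv:2007.02814 — 4 statements merged into one kernel-verified Lean document; each statement's English description precedes it below -/
import Mathlib

section
/- Let Θ be an n×m real matrix and let σ, ρ be weights as in the context. Suppose δ ≥ 1 is a real number with ω_{ρ,σ}(ᵀΘ) ≥ δ, i.e. for every δ' < δ the system |y|_ρ ≤ t, |ᵀΘy − x|_σ ≤ t^{−δ'} admits a nonzero solution (x,y) ∈ ℤ^m ⊕ ℤ^n for arbitrarily large t. Then ω_{σ,ρ}(Θ) ≥ ((σ_m^{−1} − 1) + ρ_n^{−1}δ)/(σ_m^{−1} + (ρ_n^{−1} − 1)δ). (This is the weighted generalisation of Dyson's transference theorem.) -/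
open Filter

noncomputable section

/-- The weighted norm `|x|_w = max_j |x_j|^(1/w_j)`. -/
def wnorm {k : ℕ} (w : Fin k → ℝ) (x : Fin k → ℝ) : ℝ := ⨆ j, |x j| ^ ((1 : ℝ) / w j)

/-- The weighted Diophantine exponent `ω_{σ,ρ}(Θ)`: the supremum (in `[−∞,+∞]`) of real `γ`
such that the system `|x|_σ ≤ t`, `|Θx − y|_ρ ≤ t^(−γ)` admits a nonzero integer solution
for arbitrarily large `t`. -/
def omegaWeighted {m n : ℕ} (Θ : Matrix (Fin n) (Fin m) ℝ)
    (σ : Fin m → ℝ) (ρ : Fin n → ℝ) : EReal :=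
  sSup (Real.toEReal '' {γ : ℝ | ∀ T : ℝ, ∃ t > T,
    ∃ (x : Fin m → ℤ) (y : Fin n → ℤ), (x, y) ≠ 0 ∧
      wnorm σ (fun j => (x j : ℝ)) ≤ t ∧
      wnorm ρ (fun i => Θ.mulVec (fun j => (x j : ℝ)) i - (y i : ℝ)) ≤ t ^ (-γ)})

/-!
The forms `x_j` and `(Θx - y)_i` are the coordinates `v = A z` of an integer vector `z` for a
unimodular matrix `A`. A solution of the transposed system supplies a covector `c` whose pairing
with `A z` is always an integer. Minkowski's theorem on linear forms therefore produces a nonzero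
`z` for which all coordinates of `v` but one are small and `|c ⬝ᵥ v| < 1`, so that `c ⬝ᵥ v = 0`;
choosing the exceptional coordinate `k` to be the one for which `|c_k|` times its bound is largest,
this relation bounds `v_k` as well (Mahler's transference principle).

For the weighted exponents one takes the bounds `t ^ (a σ_j)` and `t ^ (-b ρ_i)`, where
`1 - b = ρ_n⁻¹ (a - b)` and `a - δ = σ_m⁻¹ (a - b)`; then `b / a` is the asserted lower bound. If
the transposed system is only solvable with exponents `δ - ε`, replacing `b` by `b - ε` still
satisfies all the constraints, because the weights are at most `1`.
-/

open Matrix MeasureTheory Finset Real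

section Minkowski

variable {ι : Type*} [Fintype ι]

theorem exists_int_ne_zero_mem_of_two_pow_card_le_volume [Nonempty ι] {s : Set (ι → ℝ)}
    (h_symm : ∀ v ∈ s, -v ∈ s) (h_conv : Convex ℝ s) (h_cpt : IsCompact s)
    (h : 2 ^ Fintype.card ι ≤ volume s) :
    ∃ z : ι → ℤ, z ≠ 0 ∧ (fun i => (z i : ℝ)) ∈ s := by
  let b := Pi.basisFun ℝ ι
  let L := (Submodule.span ℤ (Set.range b)).toAddSubgroup
  have : DiscreteTopology L :=
    inferInstanceAs (DiscreteTopology (Submodule.span ℤ (Set.range b)))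
  have : Countable L := inferInstanceAs (Countable (Submodule.span ℤ (Set.range b)))
  have hvol : volume (ZSpan.fundamentalDomain b) * 2 ^ Module.finrank ℝ (ι → ℝ) ≤ volume s := by
    simpa [b, ZSpan.fundamentalDomain_pi_basisFun, volume_pi_pi] using h
  obtain ⟨v, hv, hvs⟩ := exists_ne_zero_mem_lattice_of_measure_mul_two_pow_le_measure
    (ZSpan.isAddFundamentalDomain' b volume) h_symm h_conv h_cpt hvol
  choose z hz using (b.mem_span_iff_repr_mem ℤ _).mp v.2
  have hzv : (fun i => (z i : ℝ)) = v := funext hz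
  refine ⟨z, ?_, hzv ▸ hvs⟩
  rintro rfl
  exact hv (Subtype.ext (hzv.symm.trans (by ext; simp)))

variable [DecidableEq ι]

theorem volume_preimage_toLin'_Icc_neg {A : Matrix ι ι ℝ} (hA : A.det ≠ 0) {B : ι → ℝ}
    (hB : ∀ i, 0 ≤ B i) :
    volume (toLin' A ⁻¹' Set.Icc (-B) B) =
      ENNReal.ofReal (2 ^ Fintype.card ι * ((∏ i, B i) / |A.det|)) := by
  have hprod : ∏ i, (B i - (-B) i) = 2 ^ Fintype.card ι * ∏ i, B i := by
    simp [← two_mul, prod_mul_distrib]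
  rw [Measure.addHaar_preimage_linearMap _ (by rwa [LinearMap.det_toLin']), volume_Icc_pi,
    ← ENNReal.ofReal_prod_of_nonneg fun i _ => by simpa using hB i, hprod,
    ← ENNReal.ofReal_mul (abs_nonneg _), LinearMap.det_toLin', abs_inv]
  ring_nf

theorem exists_int_ne_zero_abs_mulVec_le [Nonempty ι] {A : Matrix ι ι ℝ} (hA : A.det ≠ 0)
    {B : ι → ℝ} (hB : ∀ i, 0 ≤ B i) (h : |A.det| ≤ ∏ i, B i) :
    ∃ z : ι → ℤ, z ≠ 0 ∧ ∀ i, |(A *ᵥ fun j => (z j : ℝ)) i| ≤ B i := by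
  have hdet : LinearMap.det (toLin' A) ≠ 0 := by rwa [LinearMap.det_toLin']
  let e := ((toLin' A).equivOfDetNeZero hdet).toContinuousLinearEquiv
  let s := toLin' A ⁻¹' Set.Icc (-B) B
  have hvol : 2 ^ Fintype.card ι ≤ volume s := by
    rw [volume_preimage_toLin'_Icc_neg hA hB, ENNReal.ofReal_mul (by positivity),
      ENNReal.ofReal_pow zero_le_two, ENNReal.ofReal_ofNat]
    exact le_mul_of_one_le_right' (ENNReal.one_le_ofReal.mpr ((one_le_div (abs_pos.mpr hA)).mpr h))
  obtain ⟨z, hz, hzs⟩ := exists_int_ne_zero_mem_of_two_pow_card_le_volume (s := s)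
    (fun v hv => by simpa [s, mulVec_neg, neg_le, and_comm] using hv)
    ((convex_Icc _ _).linear_preimage _)
    (e.toHomeomorph.isCompact_preimage.mpr isCompact_Icc) hvol
  exact ⟨z, hz, fun i => abs_le.mpr ⟨hzs.1 i, hzs.2 i⟩⟩

end Minkowski

section Transference

variable {ι : Type*} [Fintype ι]

theorem abs_le_of_dotProduct_eq_zero {c v B : ι → ℝ} {D : ℝ} {k : ι} (hck : c k ≠ 0)
    (hD : 0 ≤ D) (hmax : ∀ i, |c i| * B i ≤ |c k| * B k) (hcv : c ⬝ᵥ v = 0)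
    (hv : ∀ i ≠ k, |v i| ≤ D * B i) : |v k| ≤ (Fintype.card ι - 1) * D * B k := by
  classical
  have hsum : c k * v k = -∑ i ∈ univ.erase k, c i * v i :=
    eq_neg_of_add_eq_zero_left ((add_sum_erase _ (fun i => c i * v i) (mem_univ k)).trans hcv)
  have hterm : ∀ i ∈ univ.erase k, |c i * v i| ≤ D * (|c k| * B k) := by
    intro i hi
    calc |c i * v i| = |c i| * |v i| := abs_mul _ _
      _ ≤ |c i| * (D * B i) := by gcongr; exact hv i (ne_of_mem_erase hi)
      _ = D * (|c i| * B i) := by ring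
      _ ≤ D * (|c k| * B k) := mul_le_mul_of_nonneg_left (hmax i) hD
  refine le_of_mul_le_mul_left ?_ (abs_pos.mpr hck)
  calc |c k| * |v k| = |∑ i ∈ univ.erase k, c i * v i| := by rw [← abs_mul, hsum, abs_neg]
    _ ≤ ∑ i ∈ univ.erase k, |c i * v i| := abs_sum_le_sum_abs _ _
    _ ≤ #(univ.erase k) • (D * (|c k| * B k)) := sum_le_card_nsmul _ _ _ hterm
    _ = |c k| * ((Fintype.card ι - 1) * D * B k) := by
      rw [nsmul_eq_mul, cast_card_erase_of_mem (mem_univ k), card_univ]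
      ring

variable [DecidableEq ι]

theorem le_prod_update_two_mul [Nontrivial ι] {B : ι → ℝ} (hB : ∀ i, 0 < B i) {k : ι} {D : ℝ}
    (h : D * B k ≤ ∏ i, B i) :
    D ≤ ∏ i, Function.update (fun i => 2 * B i) k (1 / 2) i := by
  have hD : D ≤ ∏ i ∈ univ.erase k, B i := by
    rw [← prod_erase_mul _ _ (mem_univ k)] at h
    exact le_of_mul_le_mul_right h (hB k)
  have hpos : 0 < ∏ i ∈ univ.erase k, B i := prod_pos fun i _ => hB i
  have hpow : (2 : ℝ) ≤ 2 ^ #(univ.erase k) :=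
    le_self_pow₀ one_le_two (card_ne_zero.mpr (univ_nontrivial.erase_nonempty))
  rw [prod_update_of_mem (mem_univ k), ← erase_eq, prod_mul_distrib, prod_const]
  nlinarith

theorem exists_int_ne_zero_dotProduct_mulVec_eq_zero [Nontrivial ι] {A : Matrix ι ι ℝ}
    (hA : A.det ≠ 0) {c : ι → ℝ} {w : ι → ℤ} (hcw : c ᵥ* A = fun j => (w j : ℝ)) {B : ι → ℝ}
    (hB : ∀ i, 0 < B i) {k : ι} (hck : c k ≠ 0) (h : |A.det| * (|c k| * B k) ≤ ∏ i, B i) :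
    ∃ z : ι → ℤ, z ≠ 0 ∧ c ⬝ᵥ A *ᵥ (fun j => (z j : ℝ)) = 0 ∧
      ∀ i ≠ k, |(A *ᵥ fun j => (z j : ℝ)) i| ≤ 2 * B i := by
  let A' := A.updateRow k (c ᵥ* A)
  let B' := Function.update (fun i => 2 * B i) k (1 / 2)
  have hdet : A'.det = c k * A.det := by
    rw [← smul_eq_mul, ← det_updateRow_sum, ← vecMul_eq_sum]
  have hB' : ∀ i, 0 ≤ B' i := by
    intro i
    rcases eq_or_ne i k with rfl | hi
    · simp [B']
    · simp [B', hi, (hB i).le]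
  have hprod : |A'.det| ≤ ∏ i, B' i := by
    refine le_prod_update_two_mul hB ?_
    rwa [hdet, abs_mul, mul_comm |c k|, mul_assoc]
  obtain ⟨z, hz, hzB⟩ := exists_int_ne_zero_abs_mulVec_le
    (hdet ▸ mul_ne_zero hck hA) hB' hprod
  simp only [A', B', updateRow_mulVec] at hzB
  refine ⟨z, hz, ?_, fun i hi => by simpa [hi] using hzB i⟩
  have hint : c ᵥ* A ⬝ᵥ (fun j => (z j : ℝ)) = (w ⬝ᵥ z : ℤ) := by
    simp [hcw, dotProduct]
  have hlt : |((w ⬝ᵥ z : ℤ) : ℝ)| < 1 := by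
    rw [← hint]
    exact lt_of_le_of_lt (by simpa using hzB k) one_half_lt_one
  have hzero : w ⬝ᵥ z = 0 := Int.abs_lt_one_iff.mp (by exact_mod_cast hlt)
  rw [dotProduct_mulVec, hint, hzero, Int.cast_zero]

theorem exists_int_ne_zero_abs_mulVec_le_of_vecMul_eq_int [Nontrivial ι] {A : Matrix ι ι ℝ}
    (hA : A.det ≠ 0) {c : ι → ℝ} {w : ι → ℤ} (hw : w ≠ 0)
    (hcw : c ᵥ* A = fun j => (w j : ℝ)) {B : ι → ℝ} (hB : ∀ i, 0 < B i)
    (h : ∀ k, |A.det| * (|c k| * B k) ≤ ∏ i, B i) :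
    ∃ z : ι → ℤ, z ≠ 0 ∧
      ∀ i, |(A *ᵥ fun j => (z j : ℝ)) i| ≤ 2 * Fintype.card ι * B i := by
  obtain ⟨k, hmax⟩ := Finite.exists_max fun k => |c k| * B k
  have hck : c k ≠ 0 := by
    intro hck
    have hc : c = 0 := by
      ext i
      have hi : |c i| * B i ≤ 0 := by simpa [hck] using hmax i
      exact abs_nonpos_iff.mp (nonpos_of_mul_nonpos_left hi (hB i))
    refine hw (funext fun j => ?_)
    simpa [hc] using (congrFun hcw j).symm
  obtain ⟨z, hz, hcz, hzB⟩ :=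
    exists_int_ne_zero_dotProduct_mulVec_eq_zero hA hcw hB hck (h k)
  have hcard : (1 : ℝ) ≤ Fintype.card ι := by exact_mod_cast Fintype.card_pos
  refine ⟨z, hz, fun i => ?_⟩
  rcases eq_or_ne i k with rfl | hi
  · linarith [abs_le_of_dotProduct_eq_zero hck zero_le_two hmax hcz hzB, hB i]
  · linarith [hzB i hi, le_mul_of_one_le_left (hB i).le hcard]

end Transference

section Approximation

variable {ι κ : Type*}

/-- The matrix of the linear forms `x_j` and `(Θx - y)_i` in the variables `(x, y)`. -/
def formMatrix [DecidableEq ι] [DecidableEq κ] (Θ : Matrix ι κ ℝ) : Matrix (κ ⊕ ι) (κ ⊕ ι) ℝ :=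
  fromBlocks 1 0 Θ (-1)

theorem abs_det_formMatrix [Fintype ι] [Fintype κ] [DecidableEq ι] [DecidableEq κ]
    (Θ : Matrix ι κ ℝ) : |(formMatrix Θ).det| = 1 := by
  simp [formMatrix, det_fromBlocks_zero₁₂, det_neg]

theorem vecMul_formMatrix [Fintype ι] [Fintype κ] [DecidableEq ι] [DecidableEq κ]
    (Θ : Matrix ι κ ℝ) (a : κ → ℝ) (b : ι → ℝ) :
    Sum.elim (a - Θᵀ *ᵥ b) b ᵥ* formMatrix Θ = Sum.elim a (-b) := by
  simp [formMatrix, vecMul_fromBlocks, mulVec_transpose, vecMul_neg]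

variable [Fintype κ]

/-- Solvability of the system `|x_j| ≤ X_j`, `|(Θx - y)_i| ≤ Y_i` in integer
vectors `x`, `y` that are not both zero. -/
def HasApproximation (Θ : Matrix ι κ ℝ) (X : κ → ℝ) (Y : ι → ℝ) : Prop :=
  ∃ (x : κ → ℤ) (y : ι → ℤ), (x, y) ≠ 0 ∧ (∀ j, |(x j : ℝ)| ≤ X j) ∧
    ∀ i, |(Θ *ᵥ fun j => (x j : ℝ)) i - y i| ≤ Y i

namespace HasApproximation

variable {Θ : Matrix ι κ ℝ}

theorem mono {X X' : κ → ℝ} {Y Y' : ι → ℝ} (h : HasApproximation Θ X Y) (hX : X ≤ X')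
    (hY : Y ≤ Y') : HasApproximation Θ X' Y' := by
  obtain ⟨x, y, hxy, hx, hy⟩ := h
  exact ⟨x, y, hxy, fun j => (hx j).trans (hX j), fun i => (hy i).trans (hY i)⟩

theorem of_formMatrix_mulVec [Fintype ι] [DecidableEq ι] [DecidableEq κ] {X : κ → ℝ} {Y : ι → ℝ}
    {z : κ ⊕ ι → ℤ} (hz : z ≠ 0)
    (h : ∀ k, |(formMatrix Θ *ᵥ fun l => (z l : ℝ)) k| ≤ Sum.elim X Y k) :
    HasApproximation Θ X Y := by
  refine ⟨z ∘ Sum.inl, z ∘ Sum.inr, fun h0 => hz ?_, fun j => ?_, fun i => ?_⟩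
  · rw [← Sum.elim_comp_inl_inr z, (Prod.mk_eq_zero.mp h0).1, (Prod.mk_eq_zero.mp h0).2]
    exact Sum.elim_zero_zero
  · simpa [formMatrix, fromBlocks_mulVec] using h (Sum.inl j)
  · simpa [formMatrix, fromBlocks_mulVec, neg_mulVec, ← sub_eq_add_neg, Function.comp_def]
      using h (Sum.inr i)

variable [Fintype ι]

theorem transpose [Nonempty ι] [Nonempty κ] {U Y : ι → ℝ} {V X : κ → ℝ}
    (h : HasApproximation Θᵀ U V) (hX : ∀ j, 0 < X j) (hY : ∀ i, 0 < Y i)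
    (hU : ∀ i, U i * Y i ≤ (∏ j, X j) * ∏ i, Y i)
    (hV : ∀ j, V j * X j ≤ (∏ j, X j) * ∏ i, Y i) :
    HasApproximation Θ (fun j => 2 * Fintype.card (κ ⊕ ι) * X j)
      (fun i => 2 * Fintype.card (κ ⊕ ι) * Y i) := by
  classical
  obtain ⟨b, a, hab, hb, ha⟩ := h
  let c : κ ⊕ ι → ℝ := Sum.elim ((fun j => (a j : ℝ)) - Θᵀ *ᵥ fun i => (b i : ℝ)) (fun i => b i)
  let w : κ ⊕ ι → ℤ := Sum.elim a (-b)
  have : Nontrivial (κ ⊕ ι) :=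
    ⟨Sum.inl (Classical.arbitrary κ), Sum.inr (Classical.arbitrary ι), Sum.inl_ne_inr⟩
  have hw : w ≠ 0 := by
    intro hw
    refine hab (Prod.ext (funext fun i => ?_) (funext fun j => congrFun hw (Sum.inl j)))
    exact neg_eq_zero.mp (congrFun hw (Sum.inr i))
  have hcw : c ᵥ* formMatrix Θ = fun k => (w k : ℝ) := by
    rw [vecMul_formMatrix]
    ext (j | i) <;> simp [w]
  have hB : ∀ k, 0 < Sum.elim X Y k := Sum.rec hX hY
  have hcB : ∀ k, |(formMatrix Θ).det| * (|c k| * Sum.elim X Y k) ≤ ∏ k, Sum.elim X Y k := by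
    rw [abs_det_formMatrix, Fintype.prod_sum_type]
    rintro (j | i)
    · have hcj : |c (Sum.inl j)| ≤ V j := (abs_sub_comm _ _).trans_le (ha j)
      simpa using (mul_le_mul_of_nonneg_right hcj (hX j).le).trans (hV j)
    · simpa [c] using (mul_le_mul_of_nonneg_right (hb i) (hY i).le).trans (hU i)
  obtain ⟨z, hz, hzB⟩ := exists_int_ne_zero_abs_mulVec_le_of_vecMul_eq_int
    (abs_pos.mp (abs_det_formMatrix Θ ▸ one_pos)) hw hcw hB hcB
  exact of_formMatrix_mulVec hz (Sum.rec (fun j => hzB (Sum.inl j)) fun i => hzB (Sum.inr i))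

theorem transpose_rpow [Nonempty ι] [Nonempty κ] {σ : κ → ℝ} {ρ : ι → ℝ} (hσ : ∑ j, σ j = 1)
    (hρ : ∑ i, ρ i = 1) {a b δ t : ℝ} (hρab : ∀ i, ρ i * (1 - b) ≤ a - b)
    (hσab : ∀ j, σ j * (a - δ) ≤ a - b) (ht : 1 ≤ t)
    (h : HasApproximation Θᵀ (fun i => t ^ ρ i) (fun j => t ^ (-δ * σ j))) :
    HasApproximation Θ (fun j => 2 * Fintype.card (κ ⊕ ι) * t ^ (a * σ j))
      (fun i => 2 * Fintype.card (κ ⊕ ι) * t ^ (-b * ρ i)) := by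
  have ht0 : 0 < t := one_pos.trans_le ht
  have hprod : (∏ j, t ^ (a * σ j)) * ∏ i, t ^ (-b * ρ i) = t ^ (a - b) := by
    rw [← rpow_sum_of_pos ht0, ← rpow_sum_of_pos ht0, ← mul_sum, ← mul_sum, hσ, hρ,
      ← rpow_add ht0]
    ring_nf
  refine h.transpose (fun j => by positivity) (fun i => by positivity) (fun i => ?_) fun j => ?_
  all_goals
    rw [hprod, ← rpow_add ht0]
    refine rpow_le_rpow_of_exponent_le ht ?_
  · linarith [hρab i]
  · linarith [hσab j]

end HasApproximation

end Approximation

section Exponent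

variable {m n : ℕ} {σ : Fin m → ℝ} {ρ : Fin n → ℝ}

theorem wnorm_le_iff (hσ : ∀ j, 0 < σ j) {x : Fin m → ℝ} {t : ℝ} (ht : 0 ≤ t) :
    wnorm σ x ≤ t ↔ ∀ j, |x j| ≤ t ^ σ j := by
  have hiff (j) : |x j| ^ (1 / σ j) ≤ t ↔ |x j| ≤ t ^ σ j := by
    rw [one_div, rpow_inv_le_iff_of_pos (abs_nonneg _) ht (hσ j)]
  simp only [← hiff]
  exact ⟨fun h j => (le_ciSup (Set.finite_range _).bddAbove j).trans h, fun h => Real.iSup_le h ht⟩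

variable {Θ : Matrix (Fin n) (Fin m) ℝ}

theorem hasApproximation_rpow_iff (hσ : ∀ j, 0 < σ j) (hρ : ∀ i, 0 < ρ i) {γ t : ℝ}
    (ht : 0 ≤ t) :
    HasApproximation Θ (fun j => t ^ σ j) (fun i => t ^ (-γ * ρ i)) ↔
      ∃ (x : Fin m → ℤ) (y : Fin n → ℤ), (x, y) ≠ 0 ∧ wnorm σ (fun j => (x j : ℝ)) ≤ t ∧
        wnorm ρ (fun i => (Θ *ᵥ fun j => (x j : ℝ)) i - (y i : ℝ)) ≤ t ^ (-γ) := by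
  simp only [HasApproximation, wnorm_le_iff hσ ht, wnorm_le_iff hρ (rpow_nonneg ht _),
    rpow_mul ht]

theorem eventually_const_mul_rpow_le_rpow {p q : ℝ} (C : ℝ) (hpq : p < q) :
    ∀ᶠ t : ℝ in atTop, C * t ^ p ≤ t ^ q := by
  filter_upwards [(tendsto_rpow_atTop (sub_pos.mpr hpq)).eventually_ge_atTop C,
    eventually_gt_atTop 0] with t hC ht
  calc C * t ^ p ≤ t ^ (q - p) * t ^ p := by gcongr
    _ = t ^ q := by rw [← rpow_add ht, sub_add_cancel]

theorem le_omegaWeighted (hσ : ∀ j, 0 < σ j) (hρ : ∀ i, 0 < ρ i) {γ : ℝ}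
    (h : ∃ᶠ t : ℝ in atTop, HasApproximation Θ (fun j => t ^ σ j) (fun i => t ^ (-γ * ρ i))) :
    (γ : EReal) ≤ omegaWeighted Θ σ ρ := by
  refine le_sSup ⟨γ, frequently_atTop'.mp ?_, rfl⟩
  exact (h.and_eventually (eventually_ge_atTop 0)).mono fun t ht =>
    (hasApproximation_rpow_iff hσ hρ ht.2).mp ht.1

theorem div_le_omegaWeighted (hσ : ∀ j, 0 < σ j) (hρ : ∀ i, 0 < ρ i) {a b C : ℝ} (ha : 0 < a)
    (h : ∀ b' < b, ∃ᶠ t : ℝ in atTop,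
      HasApproximation Θ (fun j => C * t ^ (a * σ j)) (fun i => C * t ^ (-b' * ρ i))) :
    ((b / a : ℝ) : EReal) ≤ omegaWeighted Θ σ ρ := by
  refine EReal.ge_of_forall_gt_iff_ge.mp fun γ hγ => le_omegaWeighted hσ hρ ?_
  have hγa : γ * a < b := (lt_div_iff₀ ha).mp (EReal.coe_lt_coe_iff.mp hγ)
  have hnhds : ∀ᶠ a' in nhds a, γ * a' < b :=
    (continuous_const_mul γ).continuousAt.eventually_lt_const hγa
  obtain ⟨a', haa', hγa'⟩ := hnhds.exists_gt
  obtain ⟨b', hγb', hb'⟩ := exists_between hγa'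
  have hX : ∀ᶠ t : ℝ in atTop, ∀ j, C * t ^ (a * σ j) ≤ t ^ (a' * σ j) :=
    eventually_all.mpr fun j =>
      eventually_const_mul_rpow_le_rpow C (mul_lt_mul_of_pos_right haa' (hσ j))
  have hY : ∀ᶠ t : ℝ in atTop, ∀ i, C * t ^ (-b' * ρ i) ≤ t ^ (-(γ * a') * ρ i) :=
    eventually_all.mpr fun i =>
      eventually_const_mul_rpow_le_rpow C (mul_lt_mul_of_pos_right (neg_lt_neg hγb') (hρ i))
  refine (tendsto_rpow_atTop (ha.trans haa')).frequently ?_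
  refine ((h b' hb').and_eventually (hX.and (hY.and (eventually_ge_atTop 0)))).mono ?_
  rintro t ⟨happ, htX, htY, ht⟩
  simp only [← rpow_mul ht]
  refine happ.mono htX fun i => (htY i).trans_eq ?_
  ring_nf

end Exponent

section Dyson

theorem weight_le_one {ι : Type*} [Fintype ι] {w : ι → ℝ} (hw : ∀ i, 0 < w i)
    (hsum : ∑ i, w i = 1) (i : ι) : w i ≤ 1 :=
  hsum ▸ single_le_sum (fun i _ => (hw i).le) (mem_univ i)

theorem mul_inv_mul_le_of_nonpos {p u w : ℝ} (hp : 0 < p) (hpw : p ≤ w) (hu : u ≤ 0) :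
    w * (p⁻¹ * u) ≤ u := by
  rw [← mul_assoc, ← div_eq_mul_inv]
  exact mul_le_of_one_le_left hu ((one_le_div hp).mpr hpw)

variable {m n : ℕ} {Θ : Matrix (Fin (n + 1)) (Fin (m + 1)) ℝ} {σ : Fin (m + 1) → ℝ}
  {ρ : Fin (n + 1) → ℝ}

theorem div_le_omegaWeighted_of_transpose (hσ : ∀ j, 0 < σ j) (hρ : ∀ i, 0 < ρ i)
    (hσs : ∑ j, σ j = 1) (hρs : ∑ i, ρ i = 1) {a b δ : ℝ} (ha : 0 < a)
    (hρab : ∀ i, ρ i * (1 - b) ≤ a - b) (hσab : ∀ j, σ j * (a - δ) ≤ a - b)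
    (h : ∀ δ' < δ, ∃ᶠ t : ℝ in atTop,
      HasApproximation Θᵀ (fun i => t ^ ρ i) (fun j => t ^ (-δ' * σ j))) :
    ((b / a : ℝ) : EReal) ≤ omegaWeighted Θ σ ρ := by
  refine div_le_omegaWeighted (C := 2 * Fintype.card (Fin (m + 1) ⊕ Fin (n + 1))) hσ hρ ha
    fun b' hb' => ?_
  have hε : 0 ≤ b - b' := by linarith
  have hfreq := h (δ - (b - b')) (by linarith)
  refine (hfreq.and_eventually (eventually_ge_atTop 1)).mono fun t ht =>
    ht.1.transpose_rpow hσs hρs (fun i => ?_) (fun j => ?_) ht.2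
  · linarith [hρab i, mul_le_of_le_one_left hε (weight_le_one hρ hρs i)]
  · linarith [hσab j, mul_le_of_le_one_left hε (weight_le_one hσ hσs j)]

theorem exists_dyson_exponents {M N δ : ℝ} (hM : 1 ≤ M) (hN : 1 ≤ N) (hδ : 1 ≤ δ) :
    ∃ a b : ℝ, 0 < a ∧ a - b ≤ 0 ∧ 1 - b = N * (a - b) ∧ a - δ = M * (a - b) ∧
      b / a = (M - 1 + N * δ) / (M + (N - 1) * δ) := by
  have hMN : 0 < M + N - 1 := by linarith
  have hden : 0 < M + (N - 1) * δ := by nlinarith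
  refine ⟨(M + (N - 1) * δ) / (M + N - 1), (M - 1 + N * δ) / (M + N - 1), div_pos hden hMN,
    ?_, ?_, ?_, div_div_div_cancel_right₀ hMN.ne' _ _⟩
  · rw [← sub_div]
    exact div_nonpos_of_nonpos_of_nonneg (by linarith) hMN.le
  · field_simp
    ring
  · field_simp
    ring

end Dyson

/-- The weighted version of Dyson's transference theorem. -/
theorem stmt0 {m n : ℕ} (Θ : Matrix (Fin (n + 1)) (Fin (m + 1)) ℝ)
    (σ : Fin (m + 1) → ℝ) (ρ : Fin (n + 1) → ℝ)
    (hσa : Antitone σ) (hρa : Antitone ρ)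
    (hσp : ∀ j, 0 < σ j) (hρp : ∀ i, 0 < ρ i)
    (hσs : ∑ j, σ j = 1) (hρs : ∑ i, ρ i = 1)
    (δ : ℝ) (hδ : 1 ≤ δ)
    (hdual : ∀ δ' < δ, ∀ T : ℝ, ∃ t > T,
      ∃ (x : Fin (m + 1) → ℤ) (y : Fin (n + 1) → ℤ), (x, y) ≠ 0 ∧
        wnorm ρ (fun i => (y i : ℝ)) ≤ t ∧
        wnorm σ (fun j => Θ.transpose.mulVec (fun i => (y i : ℝ)) j - (x j : ℝ)) ≤ t ^ (-δ')) :
    (((((σ (Fin.last m))⁻¹ - 1) + (ρ (Fin.last n))⁻¹ * δ) /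
        ((σ (Fin.last m))⁻¹ + ((ρ (Fin.last n))⁻¹ - 1) * δ) : ℝ) : EReal) ≤
      omegaWeighted Θ σ ρ := by
  obtain ⟨a, b, ha, hab, hb, haδ, hquot⟩ := exists_dyson_exponents
    ((one_le_inv₀ (hσp (Fin.last m))).mpr (weight_le_one hσp hσs _))
    ((one_le_inv₀ (hρp (Fin.last n))).mpr (weight_le_one hρp hρs _)) hδ
  rw [← hquot]
  refine div_le_omegaWeighted_of_transpose hσp hρp hσs hρs ha
    (fun i => hb ▸ mul_inv_mul_le_of_nonpos (hρp _) (hρa (Fin.le_last i)) hab)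
    (fun j => haδ ▸ mul_inv_mul_le_of_nonpos (hσp _) (hσa (Fin.le_last j)) hab)
    fun δ' hδ' => ?_
  have hfreq := (frequently_atTop'.mpr (hdual δ' hδ')).and_eventually (eventually_ge_atTop 0)
  refine hfreq.mono fun t ⟨⟨x, y, hxy, hy, hx⟩, ht⟩ => ?_
  exact (hasApproximation_rpow_iff hρp hσp ht).mpr
    ⟨y, x, fun h => hxy (congrArg Prod.swap h), hy, hx⟩
end
end

section
/- Let Λ be a unimodular lattice in ℝ^d with dual lattice Λ*. For every τ ∈ T and every k = 1,…,d one has −log d ≤ L_k(Λ,τ) + L_{d+1−k}(Λ*,−τ) ≤ log(d!). -/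
open Filter

noncomputable section

/-- A unimodular lattice in `ℝ^d`: the set of integer linear combinations of a basis of `ℝ^d`
whose matrix has determinant `±1`. -/
def IsUnimodularLattice (d : ℕ) (Λ : Set (Fin d → ℝ)) : Prop :=
  ∃ B : Matrix (Fin d) (Fin d) ℝ, |B.det| = 1 ∧
    Λ = {v | ∃ x : Fin d → ℤ, v = B.mulVec fun i => (x i : ℝ)}

/-- The dual lattice `Λ* = {w : ⟨w, z⟩ ∈ ℤ for all z ∈ Λ}`. -/
def dualLattice (d : ℕ) (Λ : Set (Fin d → ℝ)) : Set (Fin d → ℝ) :=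
  {w | ∀ z ∈ Λ, ∃ c : ℤ, ∑ i, w i * z i = (c : ℝ)}

/-- The `k`-th successive minimum `λ_k(B_τ, Λ)` of the box
`B_τ = {z : |z_i| ≤ exp (τ i)}` with respect to the lattice `Λ`. -/
def succMin (d : ℕ) (Λ : Set (Fin d → ℝ)) (τ : Fin d → ℝ) (k : ℕ) : ℝ :=
  sInf {lam : ℝ | 0 < lam ∧ ∃ v : Fin k → (Fin d → ℝ),
    (∀ l, v l ∈ Λ) ∧ LinearIndependent ℝ v ∧ ∀ l i, |v l i| ≤ lam * Real.exp (τ i)}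

/-- `L_k(Λ, τ) = log λ_k(B_τ, Λ)`. -/
def Lk (d : ℕ) (Λ : Set (Fin d → ℝ)) (τ : Fin d → ℝ) (k : ℕ) : ℝ :=
  Real.log (succMin d Λ τ k)

/-- `S_k(Λ, τ) = L_1(Λ, τ) + ⋯ + L_k(Λ, τ)`. -/
def Sk (d : ℕ) (Λ : Set (Fin d → ℝ)) (τ : Fin d → ℝ) (k : ℕ) : ℝ :=
  ∑ j ∈ Finset.Icc 1 k, Lk d Λ τ j

/-
The lower bound is linear algebra: `k` independent vectors of `Λ` and `d + 1 - k` independent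
vectors of `Λ*` are too many to be orthogonal, so two of them have a nonzero integer inner product,
whereas the boxes `a • B_τ` and `b • B_{-τ}` only allow inner products of size at most `d * a * b`.

For the upper bound, rescale `B_τ` to the unit cube and choose lattice vectors `v i`, each of
minimal Euclidean length outside the span of the previous ones. A lattice vector is at least as long
as `v i` as soon as it leaves the span of the vectors before `v i`, so the open box with half-sides
`‖v i‖ / √d` along the Gram–Schmidt frame of `v` contains no nonzero lattice vector, and Minkowski's
theorem gives `∏ i, ‖v i‖ ≤ √d ^ d * covolume`. The vectors `w i` obtained from the cofactors of the
`v i` with respect to a lattice basis belong to the dual lattice, and Hadamard's inequality gives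
`‖v i‖ * ‖w i‖ ≤ (∏ j, ‖v j‖) / covolume ≤ √d ^ d ≤ d!`. As `‖v i‖` increases with `i`, the vectors
`v i` up to index `k` and `w i` from index `k` on bound the two minima.
-/

section Preliminaries

theorem sqrt_pow_self_le_factorial (d : ℕ) : √d ^ d ≤ (d.factorial : ℝ) := by
  have pow_le_sq : d ^ d ≤ d.factorial ^ 2 :=
    calc d ^ d = ∏ _i ∈ Finset.range d, d := by simp
      _ ≤ ∏ i ∈ Finset.range d, (i + 1) * (d - i) := by
        refine Finset.prod_le_prod' fun i hi => ?_
        obtain ⟨c, rfl⟩ := Nat.exists_eq_add_of_lt (Finset.mem_range.mp hi)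
        rw [show i + c + 1 - i = c + 1 by lia]
        nlinarith [Nat.zero_le (i * c)]
      _ = d.factorial ^ 2 := by
        rw [Finset.prod_mul_distrib, Finset.prod_range_add_one_eq_factorial,
          ← Nat.descFactorial_eq_prod_range, Nat.descFactorial_self, sq]
  refine (sq_le_sq₀ (by positivity) (by positivity)).mp ?_
  rw [← pow_mul, mul_comm, pow_mul, Real.sq_sqrt d.cast_nonneg]
  exact_mod_cast pow_le_sq

theorem le_csInf_mul_csInf {S T : Set ℝ} {c : ℝ} (hc : 0 < c) (hS : S.Nonempty) (hT : T.Nonempty)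
    (hT₀ : ∀ y ∈ T, 0 < y) (hST : ∀ x ∈ S, ∀ y ∈ T, c ≤ x * y) :
    c ≤ sInf S * sInf T := by
  have le_csInf_mul : ∀ y ∈ T, c ≤ sInf S * y := fun y hy =>
    (div_le_iff₀ (hT₀ y hy)).mp <|
      le_csInf hS fun x hx => (div_le_iff₀ (hT₀ y hy)).mpr (hST x hx y hy)
  have csInf_pos : 0 < sInf S := by
    obtain ⟨y, hy⟩ := hT
    exact pos_of_mul_pos_left (hc.trans_le (le_csInf_mul y hy)) (hT₀ y hy).le
  exact (div_le_iff₀' csInf_pos).mp <|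
    le_csInf hT fun y hy => (div_le_iff₀' csInf_pos).mpr (le_csInf_mul y hy)

theorem exists_dotProduct_ne_zero {K ι κ m : Type*} [Field K] [Fintype ι] [Fintype κ] [Fintype m]
    {v : ι → m → K} {w : κ → m → K} (hv : LinearIndependent K v) (hw : LinearIndependent K w)
    (hcard : Fintype.card m < Fintype.card ι + Fintype.card κ) : ∃ i j, w j ⬝ᵥ v i ≠ 0 := by
  by_contra! h_orth
  have h_mul : Matrix.of w * (Matrix.of v).transpose = 0 := by
    ext j i
    exact h_orth i j
  have h_rank := Matrix.rank_add_rank_le_card_of_mul_eq_zero h_mul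
  rw [Matrix.rank_transpose, LinearIndependent.rank_matrix (M := Matrix.of w) hw,
    LinearIndependent.rank_matrix (M := Matrix.of v) hv] at h_rank
  lia

theorem exists_int_eq_det_ofZLatticeBasis {E ι : Type*} [NormedAddCommGroup E] [NormedSpace ℝ E]
    [FiniteDimensional ℝ E] [Fintype ι] [DecidableEq ι] {L : Submodule ℤ E} [DiscreteTopology L]
    [IsZLattice ℝ L] (b : Module.Basis ι ℤ L) {u : ι → E} (hu : ∀ i, u i ∈ L) :
    ∃ c : ℤ, (b.ofZLatticeBasis ℝ L).det u = c := by
  refine ⟨b.det fun i => ⟨u i, hu i⟩, ?_⟩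
  rw [Module.Basis.det_apply, Module.Basis.det_apply, Int.cast_det]
  congr 1
  ext i j
  exact b.ofZLatticeBasis_repr_apply ℝ L ⟨u j, hu j⟩ i

end Preliminaries

section MinimalSystem

open Module Submodule

variable {E : Type*} [NormedAddCommGroup E] [NormedSpace ℝ E] {L : Submodule ℤ E} {n : ℕ}

/-- A system of independent lattice vectors realizing the successive minima of `L` with respect to
the norm: each vector is a shortest one outside the span of its predecessors. -/
structure IsMinimalSystem (L : Submodule ℤ E) (v : Fin n → E) : Prop where
  mem : ∀ i, v i ∈ L
  linearIndependent : LinearIndependent ℝ v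
  norm_le : ∀ {i x}, x ∈ L → x ∉ span ℝ (v '' Set.Iio i) → ‖v i‖ ≤ ‖x‖

theorem IsMinimalSystem.monotone_norm {v : Fin n → E} (hv : IsMinimalSystem L v) :
    Monotone fun i => ‖v i‖ := fun _ j hij =>
  hv.norm_le (hv.mem j) <|
    hv.linearIndependent.notMem_span_image (by simpa using hij)

variable [FiniteDimensional ℝ E]

theorem exists_shortest_notMem (L : Submodule ℤ E) [DiscreteTopology L] [IsZLattice ℝ L]
    {W : Submodule ℝ E} (hW : W ≠ ⊤) : ∃ a ∈ L, a ∉ W ∧ ∀ x ∈ L, x ∉ W → ‖a‖ ≤ ‖x‖ := by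
  have norm_tendsto : Tendsto (fun x : L => ‖(x : E)‖) cofinite atTop :=
    (tendsto_norm_cocompact_atTop (E := E)).comp <|
      L.toAddSubgroup.tendsto_coe_cofinite_of_discrete (isDiscrete_iff_discreteTopology.mpr ‹_›)
  have outside_nonempty : {x : L | (x : E) ∉ W}.Nonempty := by
    by_contra h_empty
    have L_le : (L : Set E) ⊆ W := fun x hx => by
      by_contra hxW
      exact h_empty ⟨⟨x, hx⟩, hxW⟩
    exact hW (eq_top_iff.mpr (IsZLattice.span_top (K := ℝ) (L := L) ▸ span_le.mpr L_le))
  obtain ⟨a, haW, ha⟩ := norm_tendsto.exists_within_forall_le outside_nonempty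
  exact ⟨a, a.2, haW, fun x hx hxW => ha ⟨x, hx⟩ hxW⟩

theorem exists_isMinimalSystem (L : Submodule ℤ E) [DiscreteTopology L] [IsZLattice ℝ L]
    (hn : n ≤ finrank ℝ E) : ∃ v : Fin n → E, IsMinimalSystem L v := by
  induction n with
  | zero =>
    exact ⟨Fin.elim0, fun i => i.elim0, linearIndependent_empty_type, fun {i} => i.elim0⟩
  | succ n ih =>
    obtain ⟨v, hv⟩ := ih (by lia)
    have span_ne_top : span ℝ (Set.range v) ≠ ⊤ := fun h_top => by
      have h_finrank := finrank_span_eq_card hv.linearIndependent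
      rw [h_top, finrank_top, Fintype.card_fin] at h_finrank
      lia
    obtain ⟨a, haL, ha_span, ha_min⟩ := exists_shortest_notMem L span_ne_top
    refine ⟨Fin.snoc v a, fun i => ?_, hv.linearIndependent.finSnoc ha_span, fun {i x} hxL hx => ?_⟩
    · cases i using Fin.lastCases <;> simp [haL, hv.mem]
    · have image_castSucc (j : Fin n) :
          (Fin.snoc v a : Fin (n + 1) → E) '' Set.Iio j.castSucc = v '' Set.Iio j := by
        rw [← Fin.image_castSucc_Iio, Set.image_image]
        simp only [Fin.snoc_castSucc]
      have image_last : (Fin.snoc v a : Fin (n + 1) → E) '' Set.Iio (Fin.last n) = Set.range v := by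
        have Iio_last : Set.Iio (Fin.last n) = Set.range Fin.castSucc := by
          ext i
          simp [Fin.lt_def]
        rw [Iio_last, ← Set.range_comp]
        simp only [Function.comp_def, Fin.snoc_castSucc]
      cases i using Fin.lastCases with
      | last => simpa using ha_min x hxL (image_last ▸ hx)
      | cast j => simpa using hv.norm_le hxL (image_castSucc j ▸ hx)

end MinimalSystem

section Euclidean

open Module Submodule MeasureTheory
open scoped RealInnerProductSpace

variable {E : Type*} [NormedAddCommGroup E] [InnerProductSpace ℝ E] {ι : Type*} [Fintype ι] {n : ℕ}

theorem exists_norm_le_sqrt_card_mul_abs_inner [Nonempty ι] (e : OrthonormalBasis ι ℝ E) (x : E) :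
    ∃ i, ‖x‖ ≤ √(Fintype.card ι) * |⟪e i, x⟫| := by
  obtain ⟨i, hi⟩ := Finite.exists_max fun i => |⟪e i, x⟫|
  refine ⟨i, le_of_sq_le_sq ?_ (by positivity)⟩
  calc ‖x‖ ^ 2 = ∑ j, |⟪e j, x⟫| ^ 2 := by simp [← e.sum_sq_norm_inner_right x]
    _ ≤ ∑ _j : ι, |⟪e i, x⟫| ^ 2 := by
      gcongr ∑ _j : ι, ?_ ^ 2 with j
      exact hi j
    _ = (√(Fintype.card ι) * |⟪e i, x⟫|) ^ 2 := by simp [mul_pow]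

theorem abs_det_le_prod_norm (e : OrthonormalBasis (Fin n) ℝ E) (v : Fin n → E) :
    |e.toBasis.det v| ≤ ∏ i, ‖v i‖ := by
  have : Fact (finrank ℝ E = n) := ⟨by simp [finrank_eq_card_basis e.toBasis]⟩
  rw [← e.toBasis.orientation.volumeForm_robust' e v]
  exact e.toBasis.orientation.abs_volumeForm_apply_le v

theorem IsMinimalSystem.exists_norm_le_sqrt_mul_abs_inner {L : Submodule ℤ E} {v : Fin n → E}
    (hv : IsMinimalSystem L v) (e : OrthonormalBasis (Fin n) ℝ E)
    (he : ∀ i j, i < j → ⟪e j, v i⟫ = 0) {x : E} (hxL : x ∈ L) (hx : x ≠ 0) :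
    ∃ i, ‖v i‖ ≤ √n * |⟪e i, x⟫| := by
  have : Nonempty (Fin n) := by
    by_contra! h_empty
    exact hx (e.toBasis.ext_elem isEmptyElim)
  obtain ⟨i, hi⟩ := exists_norm_le_sqrt_card_mul_abs_inner e x
  rw [Fintype.card_fin] at hi
  have span_le_ker : span ℝ (v '' Set.Iio i) ≤ LinearMap.ker (innerₛₗ ℝ (e i)) := by
    rw [span_le, Set.image_subset_iff]
    exact fun j hj => he j i hj
  -- The largest coordinate of `x` is nonzero, and `e i` annihilates the predecessors of `v i`.
  have notMem_span : x ∉ span ℝ (v '' Set.Iio i) := fun h_mem => by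
    have h_inner : ⟪e i, x⟫ = 0 := span_le_ker h_mem
    rw [h_inner, abs_zero, mul_zero, norm_le_zero_iff] at hi
    exact hx hi
  exact ⟨i, (hv.norm_le hxL notMem_span).trans hi⟩

variable [FiniteDimensional ℝ E] [MeasurableSpace E] [BorelSpace E]

theorem volume_setOf_abs_inner_lt (e : OrthonormalBasis ι ℝ E) (r : ι → ℝ) :
    volume {x | ∀ i, |⟪e i, x⟫| < r i} = ∏ i, ENNReal.ofReal (2 * r i) := by
  have preimage_eq : {x | ∀ i, |⟪e i, x⟫| < r i} =
      (WithLp.ofLp ∘ e.repr) ⁻¹' Set.univ.pi fun i => Set.Ioo (-r i) (r i) := by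
    ext x
    simp [abs_lt, e.repr_apply_apply]
  rw [preimage_eq, ((PiLp.volume_preserving_ofLp ι).comp e.measurePreserving_repr).measure_preimage
    (MeasurableSet.univ_pi fun _ => measurableSet_Ioo).nullMeasurableSet, Real.volume_pi_Ioo]
  simp only [sub_neg_eq_add, ← two_mul]

variable (L : Submodule ℤ E) [DiscreteTopology L] [IsZLattice ℝ L]

theorem covolume_eq_abs_det [DecidableEq ι] (b : Basis ι ℤ L) (e : OrthonormalBasis ι ℝ E) :
    ZLattice.covolume L = |e.toBasis.det (b.ofZLatticeBasis ℝ L)| := by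
  rw [ZLattice.covolume_eq_det_mul_measureReal L volume b e.toBasis, Measure.real,
    measure_congr (ZSpan.fundamentalDomain_ae_parallelepiped e.toBasis volume),
    e.coe_toBasis, e.volume_parallelepiped]
  simp [funext (b.ofZLatticeBasis_apply ℝ L), Function.comp_def]

theorem exists_ne_zero_mem_abs_inner_lt (e : OrthonormalBasis ι ℝ E) {r : ι → ℝ}
    (hr : ∀ i, 0 ≤ r i) (h : ZLattice.covolume L < ∏ i, r i) :
    ∃ x ∈ L, x ≠ 0 ∧ ∀ i, |⟪e i, x⟫| < r i := by
  let b := Free.chooseBasis ℤ L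
  have fund : IsAddFundamentalDomain L (ZSpan.fundamentalDomain (b.ofZLatticeBasis ℝ)) volume :=
    ZLattice.isAddFundamentalDomain b volume
  have volume_lt : volume (ZSpan.fundamentalDomain (b.ofZLatticeBasis ℝ)) * 2 ^ finrank ℝ E <
      volume {x | ∀ i, |⟪e i, x⟫| < r i} := by
    rw [volume_setOf_abs_inner_lt, ← ENNReal.ofReal_prod_of_nonneg (by simpa using hr),
      ← ofReal_measureReal (ZSpan.fundamentalDomain_isBounded _).measure_lt_top.ne,
      ← ZLattice.covolume_eq_measure_fundamentalDomain L volume fund,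
      finrank_eq_card_basis e.toBasis, Finset.prod_mul_distrib, Finset.prod_const, Finset.card_univ,
      mul_comm, ENNReal.ofReal_mul (by positivity), ENNReal.ofReal_pow zero_le_two,
      ENNReal.ofReal_ofNat]
    have covolume_lt := (ENNReal.ofReal_lt_ofReal_iff_of_nonneg ENNReal.toReal_nonneg).mpr h
    exact ENNReal.mul_lt_mul_right (by simp) (by simp) covolume_lt
  have neg_mem : ∀ x ∈ {x | ∀ i, |⟪e i, x⟫| < r i}, -x ∈ {x | ∀ i, |⟪e i, x⟫| < r i} := by
    simp
  have convex : Convex ℝ {x | ∀ i, |⟪e i, x⟫| < r i} := by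
    simp only [Set.ofPred_forall, abs_lt]
    exact convex_iInter fun i => (convex_Ioo (-r i) (r i)).linear_preimage (innerₛₗ ℝ (e i))
  have : Countable L.toAddSubgroup := inferInstanceAs (Countable L)
  obtain ⟨x, hx, hxr⟩ := exists_ne_zero_mem_lattice_of_measure_mul_two_pow_lt_measure
    (L := L.toAddSubgroup) fund neg_mem convex volume_lt
  exact ⟨x, x.2, by simpa using hx, hxr⟩

theorem IsMinimalSystem.prod_norm_le (hn : finrank ℝ E = n) {v : Fin n → E}
    (hv : IsMinimalSystem L v) : ∏ i, ‖v i‖ ≤ √n ^ n * ZLattice.covolume L := by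
  let e := InnerProductSpace.gramSchmidtOrthonormalBasis (𝕜 := ℝ) (by simpa using hn) v
  have he : ∀ i j, i < j → ⟪e j, v i⟫ = 0 := fun i j hij =>
    InnerProductSpace.gramSchmidtOrthonormalBasis_inv_triangular _ v hij
  have sqrt_pow_pos : 0 < √n ^ n := by
    rcases n.eq_zero_or_pos with rfl | h_pos
    · simp
    · positivity
  by_contra! h_lt
  have covolume_lt : ZLattice.covolume L < ∏ i, ‖v i‖ / √n := by
    simpa [Finset.prod_div_distrib, lt_div_iff₀' sqrt_pow_pos] using h_lt
  obtain ⟨x, hxL, hx, hx_lt⟩ := exists_ne_zero_mem_abs_inner_lt L e (fun i => by positivity)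
    covolume_lt
  obtain ⟨i, hi⟩ := hv.exists_norm_le_sqrt_mul_abs_inner e he hxL hx
  have sqrt_pos : 0 < √(n : ℝ) := Real.sqrt_pos.mpr (Nat.cast_pos.mpr i.pos)
  exact hi.not_gt ((lt_div_iff₀' sqrt_pos).mp (hx_lt i))

end Euclidean

section Cofactor

open Module Submodule
open scoped RealInnerProductSpace

variable {E : Type*} [NormedAddCommGroup E] [InnerProductSpace ℝ E] [FiniteDimensional ℝ E]
  {ι : Type*} [Fintype ι] [DecidableEq ι]

/-- The vector representing the functional that sends `x` to the determinant, in the basis `b`, of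
the family obtained from `v` on replacing `v i` by `x`. If `b` generates a lattice and `v` consists
of lattice vectors, it belongs to the dual lattice. -/
def cofactorVector (b : Basis ι ℝ E) (v : ι → E) (i : ι) : E :=
  (InnerProductSpace.toDual ℝ E).symm (b.det.toMultilinearMap.toLinearMap v i).toContinuousLinearMap

theorem inner_cofactorVector (b : Basis ι ℝ E) (v : ι → E) (i : ι) (x : E) :
    ⟪cofactorVector b v i, x⟫ = b.det (Function.update v i x) := by
  simp [cofactorVector]

theorem linearIndependent_cofactorVector (b : Basis ι ℝ E) {v : ι → E}
    (hv : LinearIndependent ℝ v) : LinearIndependent ℝ (cofactorVector b v) := by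
  have span_eq_top : span ℝ (Set.range v) = ⊤ :=
    hv.span_eq_top_of_card_eq_finrank' (finrank_eq_card_basis b).symm
  have det_ne_zero : b.det v ≠ 0 := (b.is_basis_iff_det.mp ⟨hv, span_eq_top⟩).ne_zero
  have inner_self (i : ι) : ⟪cofactorVector b v i, v i⟫ = b.det v := by
    rw [inner_cofactorVector, Function.update_eq_self]
  have inner_of_ne {i j : ι} (hij : j ≠ i) : ⟪cofactorVector b v j, v i⟫ = 0 := by
    rw [inner_cofactorVector]
    exact b.det.map_eq_zero_of_eq _ (by simp [hij.symm]) hij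
  rw [Fintype.linearIndependent_iff]
  intro g hg i
  have h_inner : g i * b.det v = ⟪∑ j, g j • cofactorVector b v j, v i⟫ := by
    have inner_smul_of_ne (j : ι) (hij : j ≠ i) : ⟪g j • cofactorVector b v j, v i⟫ = 0 := by
      rw [real_inner_smul_left, inner_of_ne hij, mul_zero]
    rw [sum_inner, Fintype.sum_eq_single i inner_smul_of_ne, real_inner_smul_left, inner_self]
  rw [hg, inner_zero_left] at h_inner
  exact (mul_eq_zero.mp h_inner).resolve_right det_ne_zero

variable {L : Submodule ℤ E} [DiscreteTopology L] [IsZLattice ℝ L]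

theorem exists_int_eq_inner_cofactorVector (b : Basis ι ℤ L) {v : ι → E} (hv : ∀ i, v i ∈ L) (i : ι)
    {x : E} (hx : x ∈ L) : ∃ c : ℤ, ⟪cofactorVector (b.ofZLatticeBasis ℝ L) v i, x⟫ = c := by
  rw [inner_cofactorVector]
  refine exists_int_eq_det_ofZLatticeBasis b fun j => ?_
  rcases eq_or_ne j i with rfl | hji
  · simpa using hx
  · simpa [hji] using hv j

variable [MeasurableSpace E] [BorelSpace E] {n : ℕ}

theorem covolume_mul_abs_det_le_prod_norm (b : Basis (Fin n) ℤ L) (u : Fin n → E) :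
    ZLattice.covolume L * |(b.ofZLatticeBasis ℝ L).det u| ≤ ∏ i, ‖u i‖ := by
  let e : OrthonormalBasis (Fin n) ℝ E :=
    (stdOrthonormalBasis ℝ E).reindex
      (finCongr ((finrank_eq_card_basis (b.ofZLatticeBasis ℝ L)).trans (Fintype.card_fin n)))
  have det_mul_det : e.toBasis.det (b.ofZLatticeBasis ℝ L) * (b.ofZLatticeBasis ℝ L).det u =
      e.toBasis.det u := by
    conv_rhs => rw [e.toBasis.det.eq_smul_basis_det (b.ofZLatticeBasis ℝ L)]
    rfl
  rw [covolume_eq_abs_det L b e, ← abs_mul, det_mul_det]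
  exact abs_det_le_prod_norm e u

theorem covolume_mul_norm_cofactorVector_le (b : Basis (Fin n) ℤ L) (v : Fin n → E) (i : Fin n) :
    ZLattice.covolume L * (‖v i‖ * ‖cofactorVector (b.ofZLatticeBasis ℝ L) v i‖) ≤ ∏ j, ‖v j‖ := by
  set w := cofactorVector (b.ofZLatticeBasis ℝ L) v i with hw
  rcases eq_or_ne w 0 with w_eq | w_ne
  · simpa [w_eq] using Finset.prod_nonneg fun j _ => norm_nonneg (v j)
  have covolume_mul_sq_le := covolume_mul_abs_det_le_prod_norm b (Function.update v i w)
  rw [← inner_cofactorVector, ← hw, real_inner_self_eq_norm_sq, abs_sq] at covolume_mul_sq_le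
  have prod_norm_update :
      ∏ j, ‖Function.update v i w j‖ = ‖w‖ * ∏ j ∈ Finset.univ.erase i, ‖v j‖ := by
    rw [← Finset.mul_prod_erase _ _ (Finset.mem_univ i), Function.update_self]
    congr 1
    refine Finset.prod_congr rfl fun j hj => ?_
    rw [Function.update_of_ne (Finset.ne_of_mem_erase hj)]
  have covolume_mul_norm_le : ZLattice.covolume L * ‖w‖ ≤ ∏ j ∈ Finset.univ.erase i, ‖v j‖ := by
    refine le_of_mul_le_mul_left ?_ (norm_pos_iff.mpr w_ne)
    rw [← prod_norm_update]
    linarith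
  rw [← Finset.mul_prod_erase _ _ (Finset.mem_univ i), mul_left_comm]
  gcongr

theorem IsMinimalSystem.exists_dual_norm_mul_norm_le (hn : finrank ℝ E = n) {v : Fin n → E}
    (hv : IsMinimalSystem L v) :
    ∃ w : Fin n → E, LinearIndependent ℝ w ∧ (∀ i, ∀ x ∈ L, ∃ c : ℤ, ⟪w i, x⟫ = c) ∧
      ∀ i, ‖v i‖ * ‖w i‖ ≤ √n ^ n := by
  let b : Basis (Fin n) ℤ L := finBasisOfFinrankEq ℤ L ((ZLattice.rank ℝ L).trans hn)
  refine ⟨cofactorVector (b.ofZLatticeBasis ℝ L) v,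
    linearIndependent_cofactorVector _ hv.linearIndependent,
    fun i x hx => exists_int_eq_inner_cofactorVector b hv.mem i hx, fun i => ?_⟩
  refine le_of_mul_le_mul_left ?_ (ZLattice.covolume_pos L)
  exact (covolume_mul_norm_cofactorVector_le b v i).trans <|
    (hv.prod_norm_le L hn).trans_eq (mul_comm _ _)

end Cofactor

section Box

open Module
open scoped RealInnerProductSpace

variable {d : ℕ}

/-- The diagonal map with entries `exp (τ i)`, which carries the unit cube onto the box `B_τ`. -/
def boxEquiv (τ : Fin d → ℝ) : EuclideanSpace ℝ (Fin d) ≃L[ℝ] (Fin d → ℝ) :=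
  (EuclideanSpace.equiv (Fin d) ℝ).trans <| ContinuousLinearEquiv.piCongrRight fun i =>
    ContinuousLinearEquiv.unitsEquivAut ℝ (Units.mk0 (Real.exp (τ i)) (Real.exp_ne_zero _))

theorem boxEquiv_apply (τ : Fin d → ℝ) (x : EuclideanSpace ℝ (Fin d)) (i : Fin d) :
    boxEquiv τ x i = x i * Real.exp (τ i) := by
  simp [boxEquiv]

theorem abs_boxEquiv_apply_le (τ : Fin d → ℝ) (x : EuclideanSpace ℝ (Fin d)) (i : Fin d) :
    |boxEquiv τ x i| ≤ ‖x‖ * Real.exp (τ i) := by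
  rw [boxEquiv_apply, abs_mul, Real.abs_exp]
  gcongr
  exact PiLp.norm_apply_le x i

theorem sum_boxEquiv_neg_mul_boxEquiv (τ : Fin d → ℝ) (w x : EuclideanSpace ℝ (Fin d)) :
    ∑ i, boxEquiv (-τ) w i * boxEquiv τ x i = ⟪w, x⟫ := by
  rw [PiLp.inner_apply]
  refine Finset.sum_congr rfl fun i _ => ?_
  rw [boxEquiv_apply, boxEquiv_apply, mul_mul_mul_comm, ← Real.exp_add]
  simp [mul_comm]

/-- The dilation factors whose infimum is the successive minimum `succMin d Λ τ k`. -/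
def dilationFactors (d : ℕ) (Λ : Set (Fin d → ℝ)) (τ : Fin d → ℝ) (k : ℕ) : Set ℝ :=
  {lam : ℝ | 0 < lam ∧ ∃ v : Fin k → (Fin d → ℝ),
    (∀ l, v l ∈ Λ) ∧ LinearIndependent ℝ v ∧ ∀ l i, |v l i| ≤ lam * Real.exp (τ i)}

theorem mem_dilationFactors_of_norm_le {Λ : Set (Fin d → ℝ)} {τ : Fin d → ℝ} {k : ℕ}
    {v : Fin k → EuclideanSpace ℝ (Fin d)} {a : ℝ} (ha : 0 < a) (hvΛ : ∀ l, boxEquiv τ (v l) ∈ Λ)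
    (hv : LinearIndependent ℝ v) (hva : ∀ l, ‖v l‖ ≤ a) : a ∈ dilationFactors d Λ τ k := by
  refine ⟨ha, fun l => boxEquiv τ (v l), hvΛ, ?_, fun l i => ?_⟩
  · exact hv.map' (boxEquiv τ).toLinearMap (boxEquiv τ).toLinearEquiv.ker
  · exact (abs_boxEquiv_apply_le τ (v l) i).trans (by gcongr; exact hva l)

theorem one_le_mul_of_mem_dilationFactors {Λ : Set (Fin d → ℝ)} {τ : Fin d → ℝ} {k l : ℕ}
    (hkl : d < k + l) {a b : ℝ} (ha : a ∈ dilationFactors d Λ τ k)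
    (hb : b ∈ dilationFactors d (dualLattice d Λ) (-τ) l) : 1 ≤ d * (a * b) := by
  obtain ⟨-, v, hvΛ, hv, hva⟩ := ha
  obtain ⟨hb, w, hwΛ, hw, hwb⟩ := hb
  obtain ⟨i, j, hij⟩ := exists_dotProduct_ne_zero hv hw (by simpa using hkl)
  obtain ⟨c, hc⟩ : ∃ c : ℤ, w j ⬝ᵥ v i = c := hwΛ j (v i) (hvΛ i)
  have c_ne_zero : c ≠ 0 := by
    rintro rfl
    exact hij (by simpa using hc)
  have abs_mul_le (m : Fin d) : |w j m * v i m| ≤ a * b :=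
    calc |w j m * v i m| = |w j m| * |v i m| := abs_mul _ _
      _ ≤ b * Real.exp (-τ m) * (a * Real.exp (τ m)) :=
        mul_le_mul (hwb j m) (hva i m) (abs_nonneg _) (by positivity)
      _ = a * b := by
        rw [mul_mul_mul_comm, ← Real.exp_add, neg_add_cancel, Real.exp_zero, mul_one, mul_comm]
  calc (1 : ℝ) ≤ |w j ⬝ᵥ v i| := by
        rw [hc]
        exact_mod_cast Int.one_le_abs c_ne_zero
    _ ≤ ∑ m, |w j m * v i m| := Finset.abs_sum_le_sum_abs _ _
    _ ≤ ∑ _m : Fin d, a * b := Finset.sum_le_sum fun m _ => abs_mul_le m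
    _ = d * (a * b) := by simp

theorem exists_mem_dilationFactors_mul_le_factorial (Λ : Submodule ℤ (Fin d → ℝ))
    [DiscreteTopology Λ] [IsZLattice ℝ Λ] (τ : Fin d → ℝ) {k : ℕ} (hk1 : 1 ≤ k) (hkd : k ≤ d) :
    ∃ a ∈ dilationFactors d Λ τ k, ∃ b ∈ dilationFactors d (dualLattice d Λ) (-τ) (d + 1 - k),
      a * b ≤ d.factorial := by
  let L := ZLattice.comap ℝ Λ (boxEquiv τ).toLinearMap
  have finrank_eq : finrank ℝ (EuclideanSpace ℝ (Fin d)) = d := finrank_euclideanSpace_fin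
  obtain ⟨v, hv⟩ := exists_isMinimalSystem L finrank_eq.ge
  obtain ⟨w, hw, hwL, hvw⟩ := hv.exists_dual_norm_mul_norm_le finrank_eq
  let i₀ : Fin d := ⟨k - 1, by lia⟩
  let tail (l : Fin (d + 1 - k)) : Fin d := ⟨k - 1 + l, by lia⟩
  have tail_injective : Function.Injective tail := fun l m h => by
    simpa [tail, Fin.ext_iff] using h
  have norm_pos (i : Fin d) : 0 < ‖v i‖ := norm_pos_iff.mpr (hv.linearIndependent.ne_zero i)
  have sqrt_pow_pos : 0 < √d ^ d := by
    have : 0 < d := by lia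
    positivity
  have mem_dual (l) : boxEquiv (-τ) (w l) ∈ dualLattice d Λ := fun z hz => by
    obtain ⟨x, rfl⟩ := (boxEquiv τ).surjective z
    rw [sum_boxEquiv_neg_mul_boxEquiv]
    exact hwL l x hz
  refine ⟨‖v i₀‖, ?_, √d ^ d / ‖v i₀‖, ?_, ?_⟩
  · refine mem_dilationFactors_of_norm_le (v := v ∘ Fin.castLE hkd) (norm_pos i₀)
      (fun l => hv.mem _) (hv.linearIndependent.comp _ (Fin.castLE_injective hkd))
      fun l => hv.monotone_norm ?_
    exact Fin.le_def.mpr (Nat.le_sub_one_of_lt l.2)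
  · refine mem_dilationFactors_of_norm_le (v := w ∘ tail) (div_pos sqrt_pow_pos (norm_pos i₀))
      (fun l => mem_dual _) (hw.comp _ tail_injective) fun l => ?_
    calc ‖w (tail l)‖ ≤ √d ^ d / ‖v (tail l)‖ := (le_div_iff₀' (norm_pos _)).mpr (hvw _)
      _ ≤ √d ^ d / ‖v i₀‖ := by
        have := norm_pos i₀
        gcongr
        exact hv.monotone_norm (Fin.le_def.mpr (Nat.le_add_right _ _))
  · rw [mul_div_cancel₀ _ (norm_pos i₀).ne']
    exact sqrt_pow_self_le_factorial d

theorem IsUnimodularLattice.exists_eq_span_basis {Λ : Set (Fin d → ℝ)}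
    (hΛ : IsUnimodularLattice d Λ) :
    ∃ b : Basis (Fin d) ℝ (Fin d → ℝ), Λ = Submodule.span ℤ (Set.range b) := by
  obtain ⟨B, hB, rfl⟩ := hΛ
  have det_ne_zero : B.det ≠ 0 := fun h => by simp [h] at hB
  have cols_independent : LinearIndependent ℝ B.col :=
    Matrix.linearIndependent_cols_of_det_ne_zero det_ne_zero
  have mulVec_eq (x : Fin d → ℤ) : B.mulVec (fun i => (x i : ℝ)) = ∑ i, x i • B.col i := by
    ext j
    simp [Matrix.mulVec, dotProduct, mul_comm]
  refine ⟨basisOfLinearIndependentOfCardEqFinrank' B.col cols_independent (by simp), ?_⟩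
  ext z
  simp only [Set.mem_ofPred_eq, SetLike.mem_coe, coe_basisOfLinearIndependentOfCardEqFinrank',
    Submodule.mem_span_range_iff_exists_fun, mulVec_eq, eq_comm (a := z)]

end Box

theorem stmt5_general {d : ℕ} (Λ : Submodule ℤ (Fin d → ℝ)) [DiscreteTopology Λ] [IsZLattice ℝ Λ]
    (τ : Fin d → ℝ) {k : ℕ} (hk1 : 1 ≤ k) (hkd : k ≤ d) :
    -Real.log d ≤ Lk d Λ τ k + Lk d (dualLattice d Λ) (-τ) (d + 1 - k) ∧
    Lk d Λ τ k + Lk d (dualLattice d Λ) (-τ) (d + 1 - k) ≤ Real.log (Nat.factorial d) := by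
  obtain ⟨a, ha, b, hb, hab⟩ := exists_mem_dilationFactors_mul_le_factorial Λ τ hk1 hkd
  have d_pos : (0 : ℝ) < d := by exact_mod_cast hk1.trans hkd
  have lower : (d : ℝ)⁻¹ ≤ succMin d Λ τ k * succMin d (dualLattice d Λ) (-τ) (d + 1 - k) :=
    le_csInf_mul_csInf (inv_pos.mpr d_pos) ⟨a, ha⟩ ⟨b, hb⟩ (fun _ h => h.1) fun x hx y hy =>
      (inv_le_iff_one_le_mul₀' d_pos).mpr <| one_le_mul_of_mem_dilationFactors (by lia) hx hy
  have upper : succMin d Λ τ k * succMin d (dualLattice d Λ) (-τ) (d + 1 - k) ≤ d.factorial := by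
    refine le_trans (mul_le_mul ?_ ?_ ?_ ha.1.le) hab
    · exact csInf_le ⟨0, fun _ h => h.1.le⟩ ha
    · exact csInf_le ⟨0, fun _ h => h.1.le⟩ hb
    · exact Real.sInf_nonneg fun _ h => h.1.le
  have mul_pos := (inv_pos.mpr d_pos).trans_le lower
  rw [Lk, Lk, ← Real.log_mul (left_ne_zero_of_mul mul_pos.ne') (right_ne_zero_of_mul mul_pos.ne'),
    ← Real.log_inv]
  exact ⟨Real.log_le_log (inv_pos.mpr d_pos) lower, Real.log_le_log mul_pos upper⟩

theorem stmt5 (d : ℕ) (hd : 2 ≤ d) (Λ : Set (Fin d → ℝ))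
    (hΛ : IsUnimodularLattice d Λ) (τ : Fin d → ℝ) (hτ : ∑ i, τ i = 0)
    (k : ℕ) (hk1 : 1 ≤ k) (hkd : k ≤ d) :
    -Real.log d ≤ Lk d Λ τ k + Lk d (dualLattice d Λ) (-τ) (d + 1 - k) ∧
    Lk d Λ τ k + Lk d (dualLattice d Λ) (-τ) (d + 1 - k) ≤ Real.log (Nat.factorial d) := by
  obtain ⟨b, rfl⟩ := hΛ.exists_eq_span_basis
  exact stmt5_general _ τ hk1 hkd
end
end

section
/- Let Λ be a unimodular lattice in ℝ^d with dual lattice Λ*. For every τ ∈ T and every k = 1,…,d−1 one has −k·log d ≤ S_k(Λ,τ) − S_{d−k}(Λ*,−τ) ≤ (k+1)·log(d!). -/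
open Filter

noncomputable section

/-!
Rescaling by `exp (-τ i)` in the `i`-th coordinate turns `λ_i(B_τ, Λ)` and `λ_i(B_{-τ}, Λ*)` into
the successive minima `λ_i` and `λ_i*`, for the sup norm, of a unimodular lattice and of its dual.
They are related by `1 / d ≤ λ_i λ_{d+1-i}* ≤ d!`. If `v` and `w` realize the minima, a dimension
count gives a nonzero integer `⟨v_a, w_b⟩` with `a ≤ i` and `b ≤ d + 1 - i`, hence the lower bound.
For the upper bound, the columns `i, …, d` of the adjugate of the matrix with rows `v_j` are
independent dual lattice vectors, and their norms are controlled through Minkowski's second theorem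
`λ_1 ⋯ λ_d ≤ 1`. Since also `λ_1* ⋯ λ_d* ∈ [1 / d!, 1]`, summing the logarithms over `i ≤ k` and
exchanging the last `k` dual minima for the first `d - k` gives the claim.

For Minkowski's second theorem, let the ball of radius `r / 2` grow from `r = λ_m` to
`r = λ_{m+1}`, and follow the volume of its image in the quotient by the lattice points in the span
of `v_1, …, v_m`. By convexity this volume is multiplied by at least `(λ_{m+1} / λ_m) ^ (d - m)`,
and at `r = λ_{m+1}` the subgroup may be enlarged to the span of `v_1, …, v_{m+1}`, because points
of the open ball differ by less than `λ_{m+1}`.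
-/

open MeasureTheory Module
open scoped ENNReal Pointwise

section OrbitVolume

variable {X : Type*} [AddCommGroup X] {H : AddSubgroup X} {C D : Set X} {x : X}

/-- The number of points of the orbit `x + H` lying in `C`. -/
def orbitCount (H : AddSubgroup X) (C : Set X) (x : X) : ℝ≥0∞ :=
  ∑' h : H, C.indicator 1 (x + h)

/-- The weight at `x` of the partition of unity that splits mass `1` evenly among the points of
each `H`-orbit lying in `C`. It vanishes on the orbits that meet `C` infinitely often, since
`1 / ∞ = 0`. -/
def orbitWeight (H : AddSubgroup X) (C : Set X) (x : X) : ℝ≥0∞ :=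
  C.indicator 1 x / orbitCount H C x

/-- The volume of the image of `C` in the quotient `X ⧸ H`, computed upstairs by weighting the
points of `C` so that each orbit is counted once. -/
def orbitVolume [MeasurableSpace X] (μ : Measure X) (H : AddSubgroup X) (C : Set X) : ℝ≥0∞ :=
  ∫⁻ x, orbitWeight H C x ∂μ

lemma orbitCount_add_mem (h : H) : orbitCount H C (x + h) = orbitCount H C x := by
  simp only [orbitCount, add_assoc]
  exact (Equiv.addLeft h).tsum_eq fun g : H ↦ C.indicator (1 : X → ℝ≥0∞) (x + g)

lemma one_le_orbitCount (hx : x ∈ C) : 1 ≤ orbitCount H C x :=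
  (by simp [hx] : (1 : ℝ≥0∞) ≤ C.indicator 1 (x + (0 : H))).trans (ENNReal.le_tsum 0)

lemma orbitCount_ne_top (hC : {h : H | x + h ∈ C}.Finite) : orbitCount H C x ≠ ∞ := by
  rw [orbitCount, tsum_eq_sum (s := hC.toFinset) fun h hh ↦ by simpa using hh]
  exact ENNReal.sum_ne_top.2 fun h _ ↦ ne_top_of_le_ne_top ENNReal.one_ne_top
    (Set.indicator_le_self C (1 : X → ℝ≥0∞) (x + h))

lemma orbitCount_map {Y : Type*} [AddCommGroup Y] {f : X →+ Y} (hf : Function.Injective f)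
    (C : Set Y) (y : Y) :
    orbitCount (H.map f) C (f x + y) = orbitCount H ((f · + y) ⁻¹' C) x := by
  rw [orbitCount, ← (H.equivMapOfInjective f hf).toEquiv.tsum_eq]
  refine tsum_congr fun h ↦ ?_
  change C.indicator 1 (f x + y + f h) = C.indicator 1 (f (x + h) + y)
  rw [map_add, add_right_comm]

lemma orbitWeight_map {Y : Type*} [AddCommGroup Y] {f : X →+ Y} (hf : Function.Injective f)
    (C : Set Y) (y : Y) :
    orbitWeight (H.map f) C (f x + y) = orbitWeight H ((f · + y) ⁻¹' C) x := by
  rw [orbitWeight, orbitWeight, orbitCount_map hf]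
  rfl

lemma tsum_orbitWeight : ∑' h : H, orbitWeight H C (x + h) =
    orbitCount H C x / orbitCount H C x := by
  simp only [orbitWeight, orbitCount_add_mem, div_eq_mul_inv, ENNReal.tsum_mul_right]
  rfl

lemma tsum_orbitWeight_le_one : ∑' h : H, orbitWeight H C (x + h) ≤ 1 :=
  tsum_orbitWeight.trans_le ENNReal.div_self_le_one

lemma tsum_orbitWeight_eq_one (hx : x ∈ C) (hC : orbitCount H C x ≠ ∞) :
    ∑' h : H, orbitWeight H C (x + h) = 1 :=
  tsum_orbitWeight.trans (ENNReal.div_self (one_pos.trans_le (one_le_orbitCount hx)).ne' hC)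

variable [MeasurableSpace X] {μ : Measure X}

lemma orbitVolume_bot (hC : MeasurableSet C) : orbitVolume μ ⊥ C = μ C := by
  rw [← lintegral_indicator_one hC]
  refine lintegral_congr fun x ↦ ?_
  have h_count : orbitCount ⊥ C x = C.indicator 1 x :=
    (tsum_eq_single 0 fun h hh ↦ (hh (Subsingleton.elim h 0)).elim).trans (by simp)
  by_cases hx : x ∈ C <;> simp [orbitWeight, h_count, hx]

lemma orbitVolume_congr_subgroup {H' : AddSubgroup X} (hH : H ≤ H')
    (hC : ∀ h ∈ H', ∀ x ∈ C, x + h ∈ C → h ∈ H) :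
    orbitVolume μ H C = orbitVolume μ H' C := by
  refine lintegral_congr fun x ↦ ?_
  by_cases hx : x ∈ C
  · suffices h_count : orbitCount H C x = orbitCount H' C x by
      rw [orbitWeight, orbitWeight, h_count]
    refine (tsum_subtype (H : Set X) fun g ↦ C.indicator 1 (x + g)).trans <|
      .trans (tsum_congr fun g ↦ ?_) (tsum_subtype (H' : Set X) fun g ↦ C.indicator 1 (x + g)).symm
    have h_mem (hg : x + g ∈ C) : g ∈ H ↔ g ∈ H' := ⟨fun h ↦ hH h, fun h ↦ hC g h x hx hg⟩
    classical
    simp only [Set.indicator_apply, SetLike.mem_coe, ← ite_and]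
    exact if_congr (and_congr_left h_mem) rfl rfl
  · simp [orbitWeight, hx]

variable [MeasurableAdd X]

lemma orbitVolume_preimage_add_right [μ.IsAddLeftInvariant] (c : X) :
    orbitVolume μ H ((· + c) ⁻¹' C) = orbitVolume μ H C := by
  have h_weight (x : X) := orbitWeight_map (H := H) (f := .id X) (x := x) Function.injective_id C c
  simp only [AddSubgroup.map_id, AddMonoidHom.id_apply] at h_weight
  simp only [orbitVolume, ← h_weight]
  exact lintegral_add_right_eq_self _ c

variable [Countable H]

lemma measurable_orbitWeight (hC : MeasurableSet C) : Measurable (orbitWeight H C) := by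
  have h_ind : Measurable (C.indicator (1 : X → ℝ≥0∞)) := measurable_one.indicator hC
  exact h_ind.div (.tsum fun h ↦ h_ind.comp (measurable_add_const _))

variable [μ.IsAddLeftInvariant]

lemma orbitVolume_mono (hC : MeasurableSet C) (hD : MeasurableSet D) (hCD : C ⊆ D)
    (hfin : ∀ x, orbitCount H D x ≠ ∞) : orbitVolume μ H C ≤ orbitVolume μ H D := by
  have h_meas_C := measurable_orbitWeight (H := H) hC
  have h_meas_D := measurable_orbitWeight (H := H) hD
  calc ∫⁻ x, orbitWeight H C x ∂μ
      = ∫⁻ x, ∑' h : H, orbitWeight H C x * orbitWeight H D (x + h) ∂μ := by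
        refine lintegral_congr fun x ↦ ?_
        by_cases hx : x ∈ C
        · rw [ENNReal.tsum_mul_left, tsum_orbitWeight_eq_one (hCD hx) (hfin x), mul_one]
        · simp [orbitWeight, hx]
    _ = ∑' h : H, ∫⁻ x, orbitWeight H C x * orbitWeight H D (x + h) ∂μ :=
        lintegral_tsum fun h ↦ (h_meas_C.mul (h_meas_D.comp (measurable_add_const _))).aemeasurable
    _ = ∑' h : H, ∫⁻ x, orbitWeight H C (x + h) * orbitWeight H D x ∂μ := by
        rw [← (Equiv.neg H).tsum_eq]
        refine tsum_congr fun h ↦ ?_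
        rw [← lintegral_add_right_eq_self _ (h : X)]
        simp
    _ = ∫⁻ x, ∑' h : H, orbitWeight H C (x + h) * orbitWeight H D x ∂μ :=
        (lintegral_tsum fun h ↦
          ((h_meas_C.comp (measurable_add_const _)).mul h_meas_D).aemeasurable).symm
    _ ≤ ∫⁻ x, orbitWeight H D x ∂μ := lintegral_mono fun x ↦ by
        rw [ENNReal.tsum_mul_right]
        exact mul_le_of_le_one_left' tsum_orbitWeight_le_one

lemma orbitVolume_le_measure_fundamentalDomain {F : Set X} (hF : IsAddFundamentalDomain H F μ)
    (hC : MeasurableSet C) : orbitVolume μ H C ≤ μ F :=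
  calc orbitVolume μ H C
      = ∑' h : H, ∫⁻ x in F, orbitWeight H C (h +ᵥ x) ∂μ := hF.lintegral_eq_tsum'' _
    _ = ∫⁻ x in F, ∑' h : H, orbitWeight H C (x + h) ∂μ := by
        simp only [AddSubgroup.vadd_def, vadd_eq_add, add_comm _ (_ : X)]
        exact (lintegral_tsum fun h ↦
          ((measurable_orbitWeight hC).comp (measurable_add_const _)).aemeasurable).symm
    _ ≤ ∫⁻ _ in F, 1 ∂μ := lintegral_mono fun x ↦ tsum_orbitWeight_le_one
    _ = μ F := setLIntegral_one F

end OrbitVolume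

section Scaling

variable {E : Type*} [NormedAddCommGroup E] [NormedSpace ℝ E] [FiniteDimensional ℝ E]
  [MeasurableSpace E] [BorelSpace E] {X : Type*} [NormedAddCommGroup X]

lemma lintegral_eq_ofReal_pow_mul_lintegral_comp_smul (μ : Measure E) [μ.IsAddHaarMeasure]
    (f : E → ℝ≥0∞) {c : ℝ} (hc : 0 < c) :
    ∫⁻ x, f x ∂μ = ENNReal.ofReal (c ^ finrank ℝ E) * ∫⁻ x, f (c • x) ∂μ := by
  have h_comp : ∫⁻ x, f (c • x) ∂μ = ∫⁻ x, f x ∂(μ.map (c • ·)) :=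
    (lintegral_map_equiv f (Homeomorph.smulOfNeZero c hc.ne').toMeasurableEquiv).symm
  rw [h_comp, Measure.map_addHaar_smul μ hc.ne', lintegral_smul_measure, smul_eq_mul, ← mul_assoc,
    ← ENNReal.ofReal_mul (by positivity), abs_of_pos (by positivity),
    mul_inv_cancel₀ (by positivity), ENNReal.ofReal_one, one_mul]

lemma exists_lintegral_eq_mul_lintegral_lintegral_add (μ : Measure E) [μ.IsAddHaarMeasure]
    {V V' : Submodule ℝ E} (hV : IsCompl V V') :
    ∃ c : ℝ≥0∞, ∀ f : E → ℝ≥0∞, Measurable f → ∫⁻ x, f x ∂μ =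
      c * ∫⁻ y : V', ∫⁻ x : V, f (x + y) ∂Measure.addHaar ∂Measure.addHaar := by
  let e : (V × V') ≃L[ℝ] E := (V.prodEquivOfIsCompl V' hV).toContinuousLinearEquiv
  let ν : Measure E := (Measure.addHaar.prod Measure.addHaar).map e
  have : ν.IsAddHaarMeasure := e.isAddHaarMeasure_map _
  refine ⟨Measure.addHaarScalarFactor μ ν, fun f hf ↦ ?_⟩
  have he : Measurable e := e.continuous.measurable
  calc ∫⁻ x, f x ∂μ
      = ∫⁻ x, f x ∂(Measure.addHaarScalarFactor μ ν • ν) := by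
        rw [← Measure.isAddLeftInvariant_eq_smul μ ν]
    _ = Measure.addHaarScalarFactor μ ν * ∫⁻ p, f (e p) ∂(Measure.addHaar.prod Measure.addHaar) :=
        by rw [lintegral_smul_measure, lintegral_map hf he]; rfl
    _ = _ := by
        rw [lintegral_prod_symm (fun p ↦ f (e p)) (hf.comp he).aemeasurable]
        rfl

/- By convexity `c • C = C + (c - 1) • C`, so if the slice of `C` at height `y` is nonempty, then
some translate of it is contained in the slice of `c • C` at height `c • y`. -/
lemma orbitVolume_slice_le {V : Submodule ℝ E} {H : AddSubgroup V} [Countable H] {C : Set E}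
    (hC : Convex ℝ C) (hC_meas : MeasurableSet C) {c : ℝ} (hc : 1 ≤ c)
    (μ : Measure V) [μ.IsAddLeftInvariant]
    (hfin : ∀ x, orbitCount (H.map V.subtype.toAddMonoidHom) (c • C) x ≠ ∞) (y : E) :
    orbitVolume μ H ((fun x : V ↦ (x : E) + y) ⁻¹' C) ≤
      orbitVolume μ H ((fun x : V ↦ (x : E) + c • y) ⁻¹' (c • C)) := by
  have h_slice {D : Set E} (hD : MeasurableSet D) (z : E) :
      MeasurableSet ((fun x : V ↦ (x : E) + z) ⁻¹' D) :=
    hD.preimage (measurable_subtype_coe.add_const z)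
  obtain h_empty | ⟨x₀, hx₀⟩ := ((fun x : V ↦ (x : E) + y) ⁻¹' C).eq_empty_or_nonempty
  · simp [h_empty, orbitVolume, orbitWeight]
  rw [← orbitVolume_preimage_add_right (-(c - 1) • x₀)]
  refine orbitVolume_mono ((h_slice hC_meas y).preimage (measurable_add_const (-(c - 1) • x₀)))
    (h_slice (hC_meas.const_smul₀ c) _) (fun x hx ↦ ?_) fun x ↦ ?_
  · have h_smul : c • C = C + (c - 1) • C := by
      simpa using hC.add_smul zero_le_one (sub_nonneg.2 hc)
    have h_split :
        (x : E) + c • y = ((x + -(c - 1) • x₀ : V) + y) + (c - 1) • ((x₀ : E) + y) := by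
      push_cast
      module
    simp only [Set.mem_preimage, h_split, h_smul]
    exact Set.add_mem_add hx (Set.smul_mem_smul_set hx₀)
  · exact (orbitCount_map (f := V.subtype.toAddMonoidHom) V.injective_subtype _ _).symm.trans_ne
      (hfin (x + c • y))

lemma ofReal_pow_mul_orbitVolume_le (μ : Measure E) [μ.IsAddHaarMeasure] {H : AddSubgroup E}
    [Countable H] {V : Submodule ℝ E} (hH : H ≤ V.toAddSubgroup) {C : Set E} (hC : Convex ℝ C)
    (hC_meas : MeasurableSet C) {c : ℝ} (hc : 1 ≤ c) (hfin : ∀ x, orbitCount H (c • C) x ≠ ∞) :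
    ENNReal.ofReal (c ^ (finrank ℝ E - finrank ℝ V)) * orbitVolume μ H C ≤
      orbitVolume μ H (c • C) := by
  obtain ⟨V', hV⟩ := V.exists_isCompl
  obtain ⟨a, ha⟩ := exists_lintegral_eq_mul_lintegral_lintegral_add μ hV
  obtain ⟨K, rfl⟩ : ∃ K : AddSubgroup V, H = K.map V.subtype.toAddMonoidHom :=
    ⟨H.comap V.subtype.toAddMonoidHom,
      (AddSubgroup.map_comap_eq_self fun h hh ↦ ⟨⟨h, hH hh⟩, rfl⟩).symm⟩
  have : Countable K :=
    (K.equivMapOfInjective V.subtype.toAddMonoidHom V.injective_subtype).injective.countable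
  have h_volume {D : Set E} (hD : MeasurableSet D) :
      orbitVolume μ (K.map V.subtype.toAddMonoidHom) D =
        a * ∫⁻ y : V', orbitVolume .addHaar K ((fun x : V ↦ (x : E) + y) ⁻¹' D) ∂.addHaar := by
    rw [orbitVolume, ha _ (measurable_orbitWeight hD)]
    congr! 2
    ext y
    exact lintegral_congr fun x ↦
      orbitWeight_map (f := V.subtype.toAddMonoidHom) V.injective_subtype _ _
  have h_rank : finrank ℝ V' = finrank ℝ E - finrank ℝ V := by
    have := Submodule.finrank_add_eq_of_isCompl hV
    omega
  rw [h_volume hC_meas, h_volume (hC_meas.const_smul₀ c), ← h_rank, mul_left_comm]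
  gcongr
  conv_rhs => rw [lintegral_eq_ofReal_pow_mul_lintegral_comp_smul _ _ (one_pos.trans_le hc)]
  gcongr _ * ?_
  exact lintegral_mono fun y ↦ orbitVolume_slice_le hC hC_meas hc _ hfin (y : E)

lemma finite_inter_addSubgroup_of_isBounded [ProperSpace X] (L : AddSubgroup X)
    [DiscreteTopology L] {C : Set X} (hC : Bornology.IsBounded C) : (C ∩ L).Finite :=
  Metric.finite_isBounded_inter_isClosed DiscreteTopology.isDiscrete hC
    AddSubgroup.isClosed_of_discrete

lemma orbitCount_ne_top_of_isBounded [ProperSpace X] {H L : AddSubgroup X} [DiscreteTopology L]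
    (hHL : H ≤ L) {C : Set X} (hC : Bornology.IsBounded C) (x : X) : orbitCount H C x ≠ ∞ := by
  refine orbitCount_ne_top <| Set.Finite.of_finite_image (f := Subtype.val)
    ((finite_inter_addSubgroup_of_isBounded L (hC.vadd (-x))).subset ?_) Subtype.val_injective.injOn
  rintro _ ⟨h, hh, rfl⟩
  exact ⟨⟨x + h, hh, by simp⟩, hHL h.2⟩

end Scaling

section MinimalSystem

variable {E : Type*} [NormedAddCommGroup E] [NormedSpace ℝ E] {n : ℕ}

lemma range_castSucc_eq_Iio_last : Set.range (Fin.castSucc : Fin n → _) = Set.Iio (Fin.last n) :=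
  Fin.range_castSucc

/-- A linearly independent system of vectors of `L` chosen greedily by length: a vector of `L`
shorter than `v i` lies in the span of the earlier vectors. The norms `‖v i‖` are then the
successive minima of the unit ball with respect to `L`. -/
structure IsMinimalSystem_s6 (L : Set E) (v : Fin n → E) : Prop where
  mem (i : Fin n) : v i ∈ L
  linearIndependent : LinearIndependent ℝ v
  mem_span_of_norm_lt (i : Fin n) (x : E) (hx : x ∈ L) (hxi : ‖x‖ < ‖v i‖) :
    x ∈ Submodule.span ℝ (v '' Set.Iio i)

namespace IsMinimalSystem_s6

variable {L : Set E}

lemma norm_pos {v : Fin n → E} (hv : IsMinimalSystem_s6 L v) (i : Fin n) : 0 < ‖v i‖ :=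
  norm_pos_iff.2 (hv.linearIndependent.ne_zero i)

lemma monotone_norm_s6 {v : Fin n → E} (hv : IsMinimalSystem_s6 L v) : Monotone fun i ↦ ‖v i‖ := by
  refine fun i j hij ↦ le_of_not_gt fun hlt ↦ ?_
  have h_mem := hv.mem_span_of_norm_lt i (v j) (hv.mem j) hlt
  exact hv.linearIndependent.notMem_span_image (Set.notMem_Iio.2 hij) h_mem

lemma init {v : Fin (n + 1) → E} (hv : IsMinimalSystem_s6 L v) :
    IsMinimalSystem_s6 L (v ∘ Fin.castSucc) where
  mem i := hv.mem _
  linearIndependent := hv.linearIndependent.comp _ (Fin.castSucc_injective n)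
  mem_span_of_norm_lt i x hx hxi := by
    rw [Set.image_comp, Fin.image_castSucc_Iio]
    exact hv.mem_span_of_norm_lt _ x hx hxi

lemma snoc {v : Fin n → E} (hv : IsMinimalSystem_s6 L v) {w : E} (hw : w ∈ L)
    (hw_span : w ∉ Submodule.span ℝ (Set.range v))
    (hw_min : ∀ x ∈ L, ‖x‖ < ‖w‖ → x ∈ Submodule.span ℝ (Set.range v)) :
    IsMinimalSystem_s6 L (Fin.snoc v w : Fin (n + 1) → E) where
  mem i := by induction i using Fin.lastCases <;> simp [hw, hv.mem]
  linearIndependent := linearIndependent_finSnoc.2 ⟨hv.linearIndependent, hw_span⟩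
  mem_span_of_norm_lt i x hx hxi := by
    have h_image (s : Set (Fin n)) :
        (Fin.snoc v w : Fin (n + 1) → E) '' (Fin.castSucc '' s) = v '' s := by
      simp [Set.image_image]
    induction i using Fin.lastCases with
    | last =>
      rw [← range_castSucc_eq_Iio_last, ← Set.image_univ, h_image, Set.image_univ]
      exact hw_min x hx (by simpa using hxi)
    | cast i =>
      rw [← Fin.image_castSucc_Iio, h_image]
      exact hv.mem_span_of_norm_lt i x hx (by simpa using hxi)

lemma exists_norm_le {v : Fin n → E} (hv : IsMinimalSystem_s6 L v) {κ : Type*} [Fintype κ]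
    {w : κ → E} (hw : LinearIndependent ℝ w) (hwL : ∀ l, w l ∈ L) {i : Fin n}
    (hi : i < Fintype.card κ) : ∃ l, ‖v i‖ ≤ ‖w l‖ := by
  by_contra! h_lt
  classical
  have h_span : Set.range w ≤ Submodule.span ℝ ((Finset.Iio i).image v : Set E) := by
    rw [Finset.coe_image, Finset.coe_Iio]
    exact Set.range_subset_iff.2 fun l ↦ hv.mem_span_of_norm_lt i (w l) (hwL l) (h_lt l)
  have h_card := linearIndependent_le_span_aux' w hw _ h_span
  have h_card_image := Finset.card_image_le (s := Finset.Iio i) (f := v)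
  simp only [Finset.coe_sort_coe, Fintype.card_coe, Fin.card_Iio] at h_card h_card_image
  omega

lemma exists_of_le_finrank [FiniteDimensional ℝ E] (L : Submodule ℤ E) [DiscreteTopology L]
    [IsZLattice ℝ L] : ∀ m ≤ finrank ℝ E, ∃ v : Fin m → E, IsMinimalSystem_s6 (L : Set E) v
  | 0, _ => ⟨![], ⟨fun i ↦ i.elim0, linearIndependent_empty_type, fun i ↦ i.elim0⟩⟩
  | m + 1, hm => by
    obtain ⟨v, hv⟩ := exists_of_le_finrank L m (by omega)
    have h_outside : ∃ x ∈ L, x ∉ Submodule.span ℝ (Set.range v) := by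
      by_contra! h_le
      have h_top : Submodule.span ℝ (Set.range v) = ⊤ :=
        top_unique <| (IsZLattice.span_top (K := ℝ) (L := L)).ge.trans (Submodule.span_le.2 h_le)
      have h_rank := finrank_span_eq_card hv.linearIndependent
      rw [h_top, finrank_top, Fintype.card_fin] at h_rank
      omega
    obtain ⟨x, hxL, hx⟩ := h_outside
    have h_finite : (Metric.closedBall 0 ‖x‖ ∩ (L : Set E)).Finite :=
      have : DiscreteTopology L.toAddSubgroup := ‹DiscreteTopology L›
      finite_inter_addSubgroup_of_isBounded L.toAddSubgroup Metric.isBounded_closedBall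
    obtain ⟨w, ⟨⟨hw_ball, hwL⟩, hw⟩, hw_min⟩ := (h_finite.subset (Set.sep_subset _
      (· ∉ Submodule.span ℝ (Set.range v)))).exists_minimalFor norm _ ⟨x, ⟨by simp, hxL⟩, hx⟩
    refine ⟨Fin.snoc v w, hv.snoc hwL hw fun y hyL hy ↦ ?_⟩
    by_contra hy_span
    have hy_ball : y ∈ Metric.closedBall 0 ‖x‖ :=
      mem_closedBall_zero_iff.2 (hy.le.trans (mem_closedBall_zero_iff.1 hw_ball))
    exact hy.not_ge (hw_min ⟨⟨hy_ball, hyL⟩, hy_span⟩ hy.le)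

end IsMinimalSystem_s6

end MinimalSystem

section MinkowskiSecond

variable {E : Type*} [NormedAddCommGroup E] [NormedSpace ℝ E] [MeasurableSpace E] (μ : Measure E)

namespace IsMinimalSystem_s6

lemma orbitVolume_ball_init_eq {L : AddSubgroup E} {n : ℕ} {v : Fin (n + 1) → E}
    (hv : IsMinimalSystem_s6 (L : Set E) v) :
    orbitVolume μ (L ⊓ (Submodule.span ℝ (Set.range (v ∘ Fin.castSucc))).toAddSubgroup)
        (Metric.ball 0 (‖v (Fin.last n)‖ / 2)) =
      orbitVolume μ (L ⊓ (Submodule.span ℝ (Set.range v)).toAddSubgroup)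
        (Metric.ball 0 (‖v (Fin.last n)‖ / 2)) := by
  refine orbitVolume_congr_subgroup (inf_le_inf_left _ <|
    Submodule.span_mono (Set.range_comp_subset_range _ _)) fun h hh x hx hxh ↦ ⟨hh.1, ?_⟩
  have h_short : ‖h‖ < ‖v (Fin.last n)‖ := by
    rw [mem_ball_zero_iff] at hx hxh
    linarith [norm_sub_le (x + h) x, congrArg norm (add_sub_cancel_left x h)]
  have h_span := hv.mem_span_of_norm_lt _ h hh.1 h_short
  rwa [← range_castSucc_eq_Iio_last, ← Set.range_comp] at h_span

variable [FiniteDimensional ℝ E] [BorelSpace E] [μ.IsAddHaarMeasure]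

lemma ofReal_prod_norm_mul_le_orbitVolume {L : AddSubgroup E} [DiscreteTopology L] :
    ∀ {m : ℕ} {v : Fin m → E}, IsMinimalSystem_s6 (L : Set E) v → ∀ {r : ℝ}, 0 < r →
      (∀ i, ‖v i‖ ≤ r) →
      ENNReal.ofReal ((∏ i, ‖v i‖) * r ^ (finrank ℝ E - m)) * μ (Metric.ball 0 (1 / 2)) ≤
        orbitVolume μ (L ⊓ (Submodule.span ℝ (Set.range v)).toAddSubgroup) (Metric.ball 0 (r / 2))
  | 0, v, _, r, hr, _ => by
    have h_bot : L ⊓ (Submodule.span ℝ (Set.range v)).toAddSubgroup = ⊥ := by simp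
    rw [h_bot, orbitVolume_bot measurableSet_ball, ← mul_one_div r,
      Measure.addHaar_ball_mul_of_pos μ 0 hr]
    simp
  | m + 1, v, hv, r, hr, hvr => by
    set ρ := ‖v (Fin.last m)‖ with hρ_def
    set H := L ⊓ (Submodule.span ℝ (Set.range v)).toAddSubgroup
    have : Countable L := countable_of_Lindelof_of_discrete
    have : Countable H := (AddSubgroup.inclusion_injective inf_le_left).countable
    have hρ : 0 < ρ := hv.norm_pos _
    have h_rank : finrank ℝ (Submodule.span ℝ (Set.range v)) = m + 1 := by
      simpa using finrank_span_eq_card hv.linearIndependent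
    have h_le : m + 1 ≤ finrank ℝ E := h_rank ▸ Submodule.finrank_le _
    have h_init : ENNReal.ofReal ((∏ i : Fin m, ‖v i.castSucc‖) * ρ ^ (finrank ℝ E - m)) *
        μ (Metric.ball 0 (1 / 2)) ≤ orbitVolume μ H (Metric.ball 0 (ρ / 2)) :=
      (hv.init.ofReal_prod_norm_mul_le_orbitVolume hρ fun i ↦
        hv.monotone_norm_s6 (Fin.le_last _)).trans_eq (hv.orbitVolume_ball_init_eq μ)
    have h_ball : (r / ρ) • Metric.ball (0 : E) (ρ / 2) = Metric.ball 0 (r / 2) := by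
      rw [smul_ball (by positivity), smul_zero, Real.norm_of_nonneg (by positivity)]
      congr 1
      field_simp
    have h_scale := ofReal_pow_mul_orbitVolume_le μ (H := H) inf_le_right (convex_ball 0 (ρ / 2))
      measurableSet_ball ((one_le_div hρ).2 (hvr (Fin.last m)))
      (orbitCount_ne_top_of_isBounded inf_le_left (h_ball ▸ Metric.isBounded_ball))
    rw [h_ball, h_rank] at h_scale
    have h_prod : (∏ i, ‖v i‖) * r ^ (finrank ℝ E - (m + 1)) = (r / ρ) ^ (finrank ℝ E - (m + 1)) *
        ((∏ i : Fin m, ‖v i.castSucc‖) * ρ ^ (finrank ℝ E - m)) := by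
      rw [Fin.prod_univ_castSucc, ← hρ_def,
        show finrank ℝ E - m = finrank ℝ E - (m + 1) + 1 by omega, pow_succ, div_pow]
      field_simp
    calc _ = ENNReal.ofReal ((r / ρ) ^ (finrank ℝ E - (m + 1))) *
          (ENNReal.ofReal ((∏ i : Fin m, ‖v i.castSucc‖) * ρ ^ (finrank ℝ E - m)) *
            μ (Metric.ball 0 (1 / 2))) := by
          rw [h_prod, ENNReal.ofReal_mul (by positivity), mul_assoc]
      _ ≤ _ := (mul_le_mul_right h_init _).trans h_scale

theorem prod_norm_mul_measureReal_ball_le_covolume {L : Submodule ℤ E} [DiscreteTopology L]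
    [IsZLattice ℝ L] {n : ℕ} (hn : finrank ℝ E = n) {v : Fin n → E}
    (hv : IsMinimalSystem_s6 (L : Set E) v) :
    (∏ i, ‖v i‖) * μ.real (Metric.ball 0 (1 / 2)) ≤ ZLattice.covolume L μ := by
  have : DiscreteTopology L.toAddSubgroup := ‹DiscreteTopology L›
  have : Countable L.toAddSubgroup := countable_of_Lindelof_of_discrete
  have h_top : Submodule.span ℝ (Set.range v) = ⊤ :=
    hv.linearIndependent.span_eq_top_of_card_eq_finrank' (by simp [hn])
  have h_le (i : Fin n) : ‖v i‖ ≤ 1 + ∑ j, ‖v j‖ :=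
    (Finset.single_le_sum (fun j _ ↦ norm_nonneg (v j)) (Finset.mem_univ i)).trans (by simp)
  have h_orbit := ofReal_prod_norm_mul_le_orbitVolume μ (L := L.toAddSubgroup) hv
    (r := 1 + ∑ j, ‖v j‖) (by positivity) h_le
  have hF := ZLattice.isAddFundamentalDomain (Free.chooseBasis ℤ L) μ
  have hF_volume := orbitVolume_le_measure_fundamentalDomain (H := L.toAddSubgroup) hF
    (measurableSet_ball (x := (0 : E)) (ε := (1 + ∑ j, ‖v j‖) / 2))
  rw [h_top, Submodule.top_toAddSubgroup, inf_top_eq, hn, Nat.sub_self, pow_zero, mul_one]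
    at h_orbit
  rw [ZLattice.covolume_eq_measure_fundamentalDomain L μ hF]
  have hF_finite := (ZSpan.fundamentalDomain_isBounded
    ((Free.chooseBasis ℤ L).ofZLatticeBasis ℝ L)).measure_lt_top (μ := μ)
  have h_real := ENNReal.toReal_mono hF_finite.ne (h_orbit.trans hF_volume)
  rwa [ENNReal.toReal_mul, ENNReal.toReal_ofReal (by positivity)] at h_real

end IsMinimalSystem_s6

end MinkowskiSecond

section Determinants

variable {ι : Type*} [Fintype ι]

/- Frobenius–König: a permutation contributing a nonzero term to the determinant cannot map `t`
into the complement of `s`. -/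
lemma exists_apply_ne_zero_of_det_ne_zero [DecidableEq ι] {R : Type*} [CommRing R]
    {N : Matrix ι ι R} (hN : N.det ≠ 0) {s t : Finset ι} (hst : Fintype.card ι < s.card + t.card) :
    ∃ a ∈ s, ∃ b ∈ t, N a b ≠ 0 := by
  rw [Matrix.det_apply'] at hN
  obtain ⟨σ, -, hσ⟩ := Finset.exists_ne_zero_of_sum_ne_zero hN
  obtain ⟨b, hb, hσb⟩ : ∃ b ∈ t, σ b ∈ s := by
    by_contra! h_maps
    have h_card := Finset.card_le_card_of_injOn (s := t) (t := sᶜ) σ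
      (fun b hb ↦ by simpa using h_maps b hb) σ.injective.injOn
    rw [Finset.card_compl] at h_card
    have := Finset.card_le_univ s
    omega
  exact ⟨σ b, hσb, b, hb, fun h ↦ hσ <|
    mul_eq_zero_of_right _ (Finset.prod_eq_zero (Finset.mem_univ b) h)⟩

lemma det_ne_zero_of_linearIndependent_rows [DecidableEq ι] {𝕜 : Type*} [Field 𝕜]
    {v : ι → ι → 𝕜} (hv : LinearIndependent 𝕜 v) : (Matrix.of v).det ≠ 0 := by
  have h_unit : IsUnit (Matrix.of v) := Matrix.linearIndependent_rows_iff_isUnit.1 hv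
  exact ((Matrix.isUnit_iff_isUnit_det _).1 h_unit).ne_zero

lemma exists_dotProduct_ne_zero_s6 {𝕜 : Type*} [Field 𝕜] {v w : ι → ι → 𝕜}
    (hv : LinearIndependent 𝕜 v) (hw : LinearIndependent 𝕜 w) {s t : Finset ι}
    (hst : Fintype.card ι < s.card + t.card) : ∃ a ∈ s, ∃ b ∈ t, v a ⬝ᵥ w b ≠ 0 := by
  classical
  have h_det : (Matrix.of v * (Matrix.of w).transpose).det ≠ 0 := by
    rw [Matrix.det_mul, Matrix.det_transpose]
    exact mul_ne_zero (det_ne_zero_of_linearIndependent_rows hv)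
      (det_ne_zero_of_linearIndependent_rows hw)
  exact exists_apply_ne_zero_of_det_ne_zero h_det hst

lemma norm_det_le_factorial_mul_prod_norm [DecidableEq ι] {𝕜 : Type*} [NormedField 𝕜]
    (M : Matrix ι ι 𝕜) :
    ‖M.det‖ ≤ (Fintype.card ι).factorial * ∏ i, ‖M.row i‖ := by
  have h_term (σ : Equiv.Perm ι) :
      ‖((Equiv.Perm.sign σ : ℤ) : 𝕜) * ∏ i, M (σ i) i‖ ≤ ∏ i, ‖M.row i‖ := by
    have h_sign : ‖((Equiv.Perm.sign σ : ℤ) : 𝕜)‖ = 1 := by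
      rcases Int.units_eq_one_or (Equiv.Perm.sign σ) with h | h <;> simp [h]
    rw [norm_mul, h_sign, one_mul, norm_prod, ← Equiv.prod_comp σ fun i ↦ ‖M.row i‖]
    gcongr with i
    exact norm_le_pi_norm (M.row (σ i)) i
  rw [Matrix.det_apply']
  refine (norm_sum_le_of_le _ fun σ _ ↦ h_term σ).trans_eq ?_
  simp [Fintype.card_perm]

lemma norm_row_mul_norm_adjugate_col_le [DecidableEq ι] {𝕜 : Type*} [NormedField 𝕜]
    (M : Matrix ι ι 𝕜) (j : ι) :
    ‖M.row j‖ * ‖M.adjugate.col j‖ ≤ (Fintype.card ι).factorial * ∏ i, ‖M.row i‖ := by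
  rw [← Finset.mul_prod_erase _ _ (Finset.mem_univ j), mul_left_comm]
  gcongr
  rw [pi_norm_le_iff_of_nonneg (by positivity)]
  intro a
  have h_row (i : ι) (hi : i ∈ Finset.univ.erase j) :
      ‖(M.updateRow j (Pi.single a 1)).row i‖ = ‖M.row i‖ := by
    rw [Matrix.row, Matrix.updateRow_ne (Finset.ne_of_mem_erase hi), Matrix.row]
  have h_single : ‖(M.updateRow j (Pi.single a 1)).row j‖ = 1 := by
    rw [Matrix.row, Matrix.updateRow_self, Pi.norm_single, norm_one]
  rw [Matrix.col_apply, Matrix.adjugate_apply]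
  refine (norm_det_le_factorial_mul_prod_norm _).trans_eq ?_
  rw [← Finset.mul_prod_erase _ _ (Finset.mem_univ j), Finset.prod_congr rfl h_row, h_single,
    one_mul]

end Determinants

section UnimodularLattice

variable {d : ℕ} {Λ : Set (Fin d → ℝ)}

namespace IsUnimodularLattice

lemma exists_isZLattice (hΛ : IsUnimodularLattice d Λ) :
    ∃ (L : Submodule ℤ (Fin d → ℝ)) (_ : DiscreteTopology L) (_ : IsZLattice ℝ L),
      (L : Set (Fin d → ℝ)) = Λ ∧ ZLattice.covolume L = 1 := by
  obtain ⟨B, hB, rfl⟩ := hΛ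
  have h_li : LinearIndependent ℝ B.transpose.row := by
    rw [Matrix.linearIndependent_rows_iff_isUnit, Matrix.isUnit_iff_isUnit_det,
      Matrix.det_transpose, isUnit_iff_ne_zero, ← abs_ne_zero, hB]
    exact one_ne_zero
  let b := basisOfLinearIndependentOfCardEqFinrank' _ h_li (by simp)
  have hb : ⇑b = B.transpose.row := coe_basisOfLinearIndependentOfCardEqFinrank' _ _ _
  refine ⟨Submodule.span ℤ (Set.range b), inferInstance, inferInstance, ?_, ?_⟩
  · ext v
    rw [SetLike.mem_coe, Submodule.mem_span_range_iff_exists_fun, hb]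
    refine exists_congr fun c ↦ eq_comm.trans (Eq.congr_right ?_)
    ext i
    simp [Matrix.mulVec, dotProduct, mul_comm]
  · have h_rows : Matrix.of ((↑) ∘ b.restrictScalars ℤ) = B.transpose := by
      ext i j
      simp [hb]
    rw [ZLattice.covolume_eq_det _ (b.restrictScalars ℤ), h_rows, Matrix.det_transpose, hB]

lemma exists_isMinimalSystem (hΛ : IsUnimodularLattice d Λ) :
    ∃ v : Fin d → Fin d → ℝ, IsMinimalSystem_s6 Λ v := by
  obtain ⟨L, _, _, rfl, -⟩ := hΛ.exists_isZLattice
  exact IsMinimalSystem_s6.exists_of_le_finrank L d (by simp)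

lemma prod_norm_le_one (hΛ : IsUnimodularLattice d Λ) {v : Fin d → Fin d → ℝ}
    (hv : IsMinimalSystem_s6 Λ v) : ∏ i, ‖v i‖ ≤ 1 := by
  obtain ⟨L, _, _, rfl, h_covolume⟩ := hΛ.exists_isZLattice
  have h_ball : volume.real (Metric.ball (0 : Fin d → ℝ) 2⁻¹) = 1 := by
    simp [Measure.real, Real.volume_pi_ball]
  simpa [h_ball, h_covolume] using
    hv.prod_norm_mul_measureReal_ball_le_covolume volume (finrank_fin_fun ℝ)

lemma exists_int_det_eq (hΛ : IsUnimodularLattice d Λ) {M : Matrix (Fin d) (Fin d) ℝ}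
    (hM : ∀ i, M.row i ∈ Λ) : ∃ m : ℤ, M.det = m := by
  obtain ⟨B, hB, rfl⟩ := hΛ
  choose z hz using hM
  have hM_mul : M = (Matrix.of z).map (Int.castRingHom ℝ) * B.transpose := by
    ext i j
    exact (congrFun (hz i) j).trans <|
      by simp [Matrix.mul_apply, Matrix.mulVec, dotProduct, mul_comm]
  obtain ⟨ε, hε⟩ : ∃ ε : ℤ, B.det = ε := by
    rcases eq_or_eq_neg_of_abs_eq hB with h | h
    · exact ⟨1, by simp [h]⟩
    · exact ⟨-1, by simp [h]⟩
  refine ⟨(Matrix.of z).det * ε, ?_⟩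
  rw [hM_mul, Matrix.det_mul, Matrix.det_transpose, hε, Int.cast_mul]
  congr 1
  exact (RingHom.map_det (Int.castRingHom ℝ) _).symm

lemma adjugate_col_mem_dualLattice (hΛ : IsUnimodularLattice d Λ) {M : Matrix (Fin d) (Fin d) ℝ}
    (hM : ∀ i, M.row i ∈ Λ) (j : Fin d) : M.adjugate.col j ∈ dualLattice d Λ := by
  intro z hz
  obtain ⟨m, hm⟩ := hΛ.exists_int_det_eq (M := M.updateRow j z) fun i ↦ by
    rcases eq_or_ne i j with rfl | hij
    · simpa [Matrix.row] using hz
    · simpa [Matrix.row, hij] using hM i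
  refine ⟨m, ?_⟩
  rw [← hm, ← Matrix.cramer_transpose_apply, Matrix.cramer_eq_adjugate_mulVec,
    ← Matrix.adjugate_transpose]
  rfl

lemma one_le_factorial_mul_prod_norm (hΛ : IsUnimodularLattice d Λ) {v : Fin d → Fin d → ℝ}
    (hvΛ : ∀ i, v i ∈ Λ) (hv : LinearIndependent ℝ v) : 1 ≤ d.factorial * ∏ i, ‖v i‖ := by
  obtain ⟨m, hm⟩ := hΛ.exists_int_det_eq (M := Matrix.of v) hvΛ
  have hm_ne : m ≠ 0 := by
    rintro rfl
    exact det_ne_zero_of_linearIndependent_rows hv (by simpa using hm)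
  calc (1 : ℝ) ≤ |(m : ℝ)| := mod_cast Int.one_le_abs hm_ne
    _ = ‖(Matrix.of v).det‖ := by rw [hm, Real.norm_eq_abs]
    _ ≤ _ := (norm_det_le_factorial_mul_prod_norm _).trans_eq (by rw [Fintype.card_fin]; rfl)

lemma image (hΛ : IsUnimodularLattice d Λ) (f : (Fin d → ℝ) →ₗ[ℝ] Fin d → ℝ)
    (hf : |LinearMap.det f| = 1) : IsUnimodularLattice d (f '' Λ) := by
  obtain ⟨B, hB, rfl⟩ := hΛ
  refine ⟨LinearMap.toMatrix' f * B, ?_, ?_⟩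
  · rw [Matrix.det_mul, LinearMap.det_toMatrix', abs_mul, hf, hB, one_mul]
  · ext v
    simp [← Matrix.mulVec_mulVec, eq_comm]

lemma dual (hΛ : IsUnimodularLattice d Λ) : IsUnimodularLattice d (dualLattice d Λ) := by
  obtain ⟨B, hB, rfl⟩ := hΛ
  have h_unit : IsUnit B.transpose.det := by
    rw [Matrix.det_transpose, isUnit_iff_ne_zero, ← abs_ne_zero, hB]
    exact one_ne_zero
  refine ⟨B.transpose⁻¹, ?_, ?_⟩
  · rw [Matrix.det_nonsing_inv, Ring.inverse_eq_inv', abs_inv, Matrix.det_transpose, hB, inv_one]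
  ext w
  constructor
  · intro hw
    have h_coord (j : Fin d) : ∃ c : ℤ, B.transpose.mulVec w j = c := by
      obtain ⟨c, hc⟩ := hw (B.mulVec (Pi.single j 1))
        ⟨Pi.single j 1, by congr 1; ext i; simp [Pi.single_apply]⟩
      refine ⟨c, hc ▸ ?_⟩
      rw [Matrix.mulVec_single_one]
      simp [Matrix.mulVec, dotProduct, mul_comm]
    choose c hc using h_coord
    refine ⟨c, ?_⟩
    rw [← funext hc, Matrix.mulVec_mulVec, Matrix.nonsing_inv_mul _ h_unit, Matrix.one_mulVec]
  · rintro ⟨c, rfl⟩ _ ⟨x, rfl⟩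
    refine ⟨∑ i, c i * x i, ?_⟩
    change (B.transpose⁻¹.mulVec _) ⬝ᵥ (B.mulVec _) = _
    rw [Matrix.dotProduct_mulVec, ← Matrix.mulVec_transpose, Matrix.mulVec_mulVec,
      Matrix.mul_nonsing_inv _ h_unit, Matrix.one_mulVec]
    simp [dotProduct]

end IsUnimodularLattice

end UnimodularLattice

section Transference

variable {d : ℕ} {Λ : Set (Fin d → ℝ)} {v w : Fin d → Fin d → ℝ}

lemma abs_dotProduct_le {ι : Type*} [Fintype ι] (x y : ι → ℝ) :
    |x ⬝ᵥ y| ≤ Fintype.card ι * (‖x‖ * ‖y‖) := by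
  refine (Finset.abs_sum_le_sum_abs _ _).trans ?_
  refine (Finset.sum_le_card_nsmul _ _ (‖x‖ * ‖y‖) fun j _ ↦ ?_).trans (by simp)
  rw [abs_mul]
  exact mul_le_mul (norm_le_pi_norm x j) (norm_le_pi_norm y j) (abs_nonneg _) (norm_nonneg _)

lemma IsMinimalSystem_s6.one_le_mul_norm_mul_norm_rev (hv : IsMinimalSystem_s6 Λ v)
    (hw : IsMinimalSystem_s6 (dualLattice d Λ) w) (i : Fin d) :
    1 ≤ d * (‖v i‖ * ‖w i.rev‖) := by
  obtain ⟨a, ha, b, hb, hab⟩ := exists_dotProduct_ne_zero_s6 hv.linearIndependent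
    hw.linearIndependent (s := Finset.Iic i) (t := Finset.Iic i.rev)
    (by simp only [Fintype.card_fin, Fin.card_Iic, Fin.val_rev]; omega)
  obtain ⟨m, hm⟩ : ∃ m : ℤ, v a ⬝ᵥ w b = m := by
    rw [dotProduct_comm]
    exact hw.mem b (v a) (hv.mem a)
  have hm_ne : m ≠ 0 := by
    rintro rfl
    exact hab (by simpa using hm)
  calc (1 : ℝ) ≤ |(m : ℝ)| := mod_cast Int.one_le_abs hm_ne
    _ = |v a ⬝ᵥ w b| := by rw [hm]
    _ ≤ d * (‖v a‖ * ‖w b‖) := (abs_dotProduct_le _ _).trans_eq (by rw [Fintype.card_fin])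
    _ ≤ d * (‖v i‖ * ‖w i.rev‖) := by
      gcongr
      · exact hv.monotone_norm_s6 (Finset.mem_Iic.1 ha)
      · exact hw.monotone_norm_s6 (Finset.mem_Iic.1 hb)

lemma IsUnimodularLattice.norm_mul_norm_rev_le_factorial (hΛ : IsUnimodularLattice d Λ)
    (hv : IsMinimalSystem_s6 Λ v) (hw : IsMinimalSystem_s6 (dualLattice d Λ) w) (i : Fin d) :
    ‖v i‖ * ‖w i.rev‖ ≤ d.factorial := by
  have h_adjugate : LinearIndependent ℝ (Matrix.of v).adjugate.col := by
    rw [Matrix.linearIndependent_cols_iff_isUnit, Matrix.isUnit_iff_isUnit_det,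
      Matrix.det_adjugate]
    exact (det_ne_zero_of_linearIndependent_rows hv.linearIndependent).isUnit.pow _
  obtain ⟨⟨l, hil⟩, hl⟩ := hw.exists_norm_le (i := i.rev) (κ := Finset.Ici i)
    (h_adjugate.comp _ Subtype.val_injective)
    (fun j ↦ hΛ.adjugate_col_mem_dualLattice hv.mem j)
    (by simp only [Fintype.card_coe, Fin.card_Ici, Fin.val_rev]; omega)
  calc ‖v i‖ * ‖w i.rev‖ ≤ ‖v l‖ * ‖(Matrix.of v).adjugate.col l‖ :=
        mul_le_mul (hv.monotone_norm_s6 (Finset.mem_Ici.1 hil)) hl (norm_nonneg _) (norm_nonneg _)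
    _ ≤ d.factorial * ∏ i, ‖v i‖ :=
        (norm_row_mul_norm_adjugate_col_le _ l).trans_eq (by rw [Fintype.card_fin]; rfl)
    _ ≤ d.factorial := mul_le_of_le_one_right (by positivity) (hΛ.prod_norm_le_one hv)

end Transference

section Dilation

variable {d : ℕ} {Λ : Set (Fin d → ℝ)} {τ : Fin d → ℝ}

/-- The diagonal map with entries `exp (τ i)`. It carries the cube `[-1, 1] ^ d` onto the box
`B_τ`, so that the successive minima of `B_τ` with respect to `Λ` are those of the unit ball of
the sup norm with respect to `dilation (-τ) '' Λ`. -/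
def dilation (τ : Fin d → ℝ) : (Fin d → ℝ) ≃ₗ[ℝ] (Fin d → ℝ) :=
  LinearEquiv.piCongrRight fun i ↦
    LinearEquiv.smulOfNeZero ℝ ℝ (Real.exp (τ i)) (Real.exp_ne_zero (τ i))

@[simp]
lemma dilation_apply (τ z : Fin d → ℝ) (i : Fin d) : dilation τ z i = Real.exp (τ i) * z i :=
  rfl

lemma dilation_symm (τ : Fin d → ℝ) : (dilation τ).symm = dilation (-τ) := by
  ext1 z
  rw [LinearEquiv.symm_apply_eq]
  ext i
  simp [← mul_assoc, ← Real.exp_add]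

lemma det_dilation (τ : Fin d → ℝ) :
    LinearMap.det (dilation τ : (Fin d → ℝ) →ₗ[ℝ] Fin d → ℝ) = Real.exp (∑ i, τ i) := by
  have h_diagonal : LinearMap.toMatrix' (dilation τ : (Fin d → ℝ) →ₗ[ℝ] Fin d → ℝ) =
      Matrix.diagonal fun i ↦ Real.exp (τ i) := by
    ext i j
    simp [LinearMap.toMatrix'_apply, Matrix.diagonal_apply, Pi.single_apply]
  rw [← LinearMap.det_toMatrix', h_diagonal, Matrix.det_diagonal, Real.exp_sum]

lemma dualLattice_dilation_image (τ : Fin d → ℝ) (Λ : Set (Fin d → ℝ)) :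
    dualLattice d (dilation τ '' Λ) = dilation (-τ) '' dualLattice d Λ := by
  ext w
  rw [← dilation_symm, LinearEquiv.image_symm_eq_preimage]
  simp [dualLattice, mul_left_comm, mul_assoc]

lemma norm_dilation_neg_le_iff {τ z : Fin d → ℝ} {r : ℝ} (hr : 0 ≤ r) :
    ‖dilation (-τ) z‖ ≤ r ↔ ∀ i, |z i| ≤ r * Real.exp (τ i) := by
  rw [pi_norm_le_iff_of_nonneg hr]
  refine forall_congr' fun i ↦ ?_
  rw [dilation_apply, Real.norm_eq_abs, abs_mul, Real.abs_exp, Pi.neg_apply, Real.exp_neg,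
    inv_mul_le_iff₀ (Real.exp_pos _), mul_comm]

lemma IsMinimalSystem_s6.succMin_eq_norm {n : ℕ} {v : Fin n → Fin d → ℝ}
    (hv : IsMinimalSystem_s6 (dilation (-τ) '' Λ) v) (i : Fin n) :
    succMin d Λ τ (i + 1) = ‖v i‖ := by
  refine IsLeast.csInf_eq ⟨⟨hv.norm_pos i, fun l ↦ dilation τ (v (l.castLE i.2)),
    fun l ↦ ?_, ?_, fun l ↦ ?_⟩, ?_⟩
  · obtain ⟨z, hz, hzv⟩ := hv.mem (l.castLE i.2)
    beta_reduce
    rwa [← hzv, ← dilation_symm, LinearEquiv.apply_symm_apply]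
  · exact (hv.linearIndependent.comp _ (Fin.castLE_injective i.2)).map' (dilation τ).toLinearMap
      (dilation τ).ker
  · rw [← norm_dilation_neg_le_iff (norm_nonneg _), ← dilation_symm,
      LinearEquiv.symm_apply_apply]
    exact hv.monotone_norm_s6 (Fin.le_def.2 (Nat.le_of_lt_succ l.2))
  · rintro r ⟨hr, w, hwΛ, hw, hwr⟩
    obtain ⟨l, hl⟩ := hv.exists_norm_le (i := i)
      (hw.map' (dilation (-τ)).toLinearMap (dilation (-τ)).ker)
      (fun l ↦ Set.mem_image_of_mem _ (hwΛ l)) (by simp)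
    exact hl.trans ((norm_dilation_neg_le_iff hr.le).2 (hwr l))

lemma IsMinimalSystem_s6.Lk_eq_log_norm {n : ℕ} {v : Fin n → Fin d → ℝ}
    (hv : IsMinimalSystem_s6 (dilation (-τ) '' Λ) v) (i : Fin n) :
    Lk d Λ τ (i + 1) = Real.log ‖v i‖ := by
  rw [Lk, hv.succMin_eq_norm]

lemma IsUnimodularLattice.dilation_image (hΛ : IsUnimodularLattice d Λ) (hτ : ∑ i, τ i = 0) :
    IsUnimodularLattice d (dilation τ '' Λ) :=
  hΛ.image (dilation τ : (Fin d → ℝ) →ₗ[ℝ] _) (by rw [det_dilation, hτ, Real.exp_zero, abs_one])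

end Dilation

section LogMinima

variable {d : ℕ} {Λ : Set (Fin d → ℝ)} {τ : Fin d → ℝ}

lemma IsUnimodularLattice.Lk_add_Lk_dual_mem_Icc (hΛ : IsUnimodularLattice d Λ)
    (hτ : ∑ i, τ i = 0) {j : ℕ} (hj : j ∈ Finset.Icc 1 d) :
    Lk d Λ τ j + Lk d (dualLattice d Λ) (-τ) (d + 1 - j) ∈
      Set.Icc (-Real.log d) (Real.log d.factorial) := by
  obtain ⟨hj_pos, hjd⟩ := Finset.mem_Icc.1 hj
  have hΛτ : IsUnimodularLattice d (dilation (-τ) '' Λ) := hΛ.dilation_image (by simp [hτ])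
  obtain ⟨v, hv⟩ := hΛτ.exists_isMinimalSystem
  obtain ⟨w, hw⟩ := hΛτ.dual.exists_isMinimalSystem
  let i : Fin d := ⟨j - 1, by omega⟩
  have hv_log : Lk d Λ τ j = Real.log ‖v i‖ := by
    rw [← hv.Lk_eq_log_norm, Nat.sub_add_cancel hj_pos]
  have hw_log : Lk d (dualLattice d Λ) (-τ) (d + 1 - j) = Real.log ‖w i.rev‖ := by
    rw [dualLattice_dilation_image] at hw
    rw [← hw.Lk_eq_log_norm, Fin.val_rev]
    congr 1
    change d + 1 - j = d - (j - 1 + 1) + 1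
    omega
  have hd_pos : (d : ℝ) ≠ 0 := by norm_cast; omega
  have h_pos := mul_pos (hv.norm_pos i) (hw.norm_pos i.rev)
  have h_lower := Real.log_nonneg (hv.one_le_mul_norm_mul_norm_rev hw i)
  have h_upper := Real.log_le_log h_pos (hΛτ.norm_mul_norm_rev_le_factorial hv hw i)
  rw [Real.log_mul hd_pos h_pos.ne'] at h_lower
  rw [hv_log, hw_log, ← Real.log_mul (hv.norm_pos i).ne' (hw.norm_pos _).ne']
  exact ⟨by linarith, h_upper⟩

lemma IsUnimodularLattice.Sk_self_mem_Icc (hΛ : IsUnimodularLattice d Λ) (hτ : ∑ i, τ i = 0) :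
    Sk d Λ τ d ∈ Set.Icc (-Real.log d.factorial) 0 := by
  have hΛτ : IsUnimodularLattice d (dilation (-τ) '' Λ) := hΛ.dilation_image (by simp [hτ])
  obtain ⟨v, hv⟩ := hΛτ.exists_isMinimalSystem
  have h_log : Sk d Λ τ d = Real.log (∏ i, ‖v i‖) := by
    rw [Real.log_prod fun i _ ↦ (hv.norm_pos i).ne', Sk, ← Finset.Ico_add_one_right_eq_Icc,
      ← Finset.sum_Ico_add' _ 0 d 1, ← Finset.range_eq_Ico, Finset.sum_range]
    exact Finset.sum_congr rfl fun i _ ↦ hv.Lk_eq_log_norm i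
  have h_pos : 0 < ∏ i, ‖v i‖ := Finset.prod_pos fun i _ ↦ hv.norm_pos i
  have h_lower := Real.log_nonneg
    (hΛτ.one_le_factorial_mul_prod_norm hv.mem hv.linearIndependent)
  rw [Real.log_mul (by positivity) h_pos.ne'] at h_lower
  rw [h_log]
  exact ⟨by linarith, Real.log_nonpos h_pos.le (hΛτ.prod_norm_le_one hv)⟩

lemma Sk_self_eq_add_sum_reflect (Λ : Set (Fin d → ℝ)) (τ : Fin d → ℝ) {k : ℕ} (hk : k ≤ d) :
    Sk d Λ τ d = Sk d Λ τ (d - k) + ∑ j ∈ Finset.Icc 1 k, Lk d Λ τ (d + 1 - j) := by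
  simp only [Sk, ← Finset.Ico_add_one_right_eq_Icc]
  rw [Finset.sum_Ico_reflect _ _ (by omega), show d + 1 + 1 - (k + 1) = d - k + 1 by omega,
    Nat.add_sub_cancel, Finset.sum_Ico_consecutive _ (by omega) (by omega)]

end LogMinima

theorem stmt6 (d : ℕ) (hd : 2 ≤ d) (Λ : Set (Fin d → ℝ))
    (hΛ : IsUnimodularLattice d Λ) (τ : Fin d → ℝ) (hτ : ∑ i, τ i = 0)
    (k : ℕ) (hk1 : 1 ≤ k) (hkd : k ≤ d - 1) :
    -(k : ℝ) * Real.log d ≤ Sk d Λ τ k - Sk d (dualLattice d Λ) (-τ) (d - k) ∧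
    Sk d Λ τ k - Sk d (dualLattice d Λ) (-τ) (d - k) ≤ ((k : ℝ) + 1) * Real.log (Nat.factorial d) := by
  have h_pair (j : ℕ) (hj : j ∈ Finset.Icc 1 k) := hΛ.Lk_add_Lk_dual_mem_Icc hτ
    (Finset.Icc_subset_Icc_right (hkd.trans (Nat.sub_le d 1)) hj)
  have h_lower := Finset.card_nsmul_le_sum _ _ _ fun j hj ↦ (h_pair j hj).1
  have h_upper := Finset.sum_le_card_nsmul _ _ _ fun j hj ↦ (h_pair j hj).2
  have h_full := hΛ.dual.Sk_self_mem_Icc (τ := -τ) (by simp [hτ])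
  rw [Sk_self_eq_add_sum_reflect _ _ (hkd.trans (Nat.sub_le d 1))] at h_full
  simp only [Finset.sum_add_distrib, Nat.card_Icc, Nat.add_sub_cancel, nsmul_eq_mul]
    at h_lower h_upper
  rw [← Sk] at h_lower h_upper
  constructor <;> linarith [h_full.1, h_full.2]
end
end

section
/- For every real γ one has Ψ̲_1(Λ(Θ), μ(γ)) ≤ Ψ̲_1(Λ*(Θ), −μ(γ))/(d−1). -/
open Filter

noncomputable section

/-- The lattice `Λ(Θ) = {(x, y − Θx) : x ∈ ℤ^m, y ∈ ℤ^n} ⊂ ℝ^(m+n)`. -/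
def latt (m n : ℕ) (Θ : Matrix (Fin n) (Fin m) ℝ) : Set (Fin (m + n) → ℝ) :=
  {v | ∃ (x : Fin m → ℤ) (y : Fin n → ℤ),
    v = Fin.append (fun j => (x j : ℝ))
      (fun i => (y i : ℝ) - Θ.mulVec (fun j => (x j : ℝ)) i)}

/-- The dual lattice `Λ*(Θ) = {(x + ᵀΘy, y) : x ∈ ℤ^m, y ∈ ℤ^n} ⊂ ℝ^(m+n)`. -/
def lattDual (m n : ℕ) (Θ : Matrix (Fin n) (Fin m) ℝ) : Set (Fin (m + n) → ℝ) :=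
  {v | ∃ (x : Fin m → ℤ) (y : Fin n → ℤ),
    v = Fin.append (fun j => (x j : ℝ) + Θ.transpose.mulVec (fun i => (y i : ℝ)) j)
      (fun i => (y i : ℝ))}

/-- `e₁ = (1−dσ₁, …, 1−dσ_m, 1, …, 1)` with `n` trailing ones, `d = m + n`. -/
def eOne (m n : ℕ) (σ : Fin m → ℝ) : Fin (m + n) → ℝ :=
  Fin.append (fun j => 1 - ((m + n : ℕ) : ℝ) * σ j) (fun _ => 1)

/-- `e₂ = (1, …, 1, 1−dρ_n, …, 1−dρ₁)` with `m` leading ones, `d = m + n`. -/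
def eTwo (m n : ℕ) (ρ : Fin n → ℝ) : Fin (m + n) → ℝ :=
  Fin.append (fun _ => (1 : ℝ)) (fun i => 1 - ((m + n : ℕ) : ℝ) * ρ i.rev)

/-- `μ(γ) = −e₁ + γ e₂`. -/
def muGamma (m n : ℕ) (σ : Fin m → ℝ) (ρ : Fin n → ℝ) (γ : ℝ) : Fin (m + n) → ℝ :=
  -eOne m n σ + γ • eTwo m n ρ

/-- `μ*(δ) = δ e₁ − e₂`. -/
def muStar (m n : ℕ) (σ : Fin m → ℝ) (ρ : Fin n → ℝ) (δ : ℝ) : Fin (m + n) → ℝ :=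
  δ • eOne m n σ - eTwo m n ρ

/-- Schmidt–Summerer lower exponent of the first type:
`ψ̲_k(Λ, μ) = liminf_{s→+∞} L_k(Λ, sμ)/s`. -/
def psiLow (d : ℕ) (Λ : Set (Fin d → ℝ)) (μ : Fin d → ℝ) (k : ℕ) : ℝ :=
  liminf (fun s : ℝ => Lk d Λ (s • μ) k / s) atTop

/-- Schmidt–Summerer upper exponent of the first type:
`ψ̄_k(Λ, μ) = limsup_{s→+∞} L_k(Λ, sμ)/s`. -/
def psiUp (d : ℕ) (Λ : Set (Fin d → ℝ)) (μ : Fin d → ℝ) (k : ℕ) : ℝ :=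
  limsup (fun s : ℝ => Lk d Λ (s • μ) k / s) atTop

/-- Schmidt–Summerer lower exponent of the second type:
`Ψ̲_k(Λ, μ) = liminf_{s→+∞} S_k(Λ, sμ)/s`. -/
def PsiLow (d : ℕ) (Λ : Set (Fin d → ℝ)) (μ : Fin d → ℝ) (k : ℕ) : ℝ :=
  liminf (fun s : ℝ => Sk d Λ (s • μ) k / s) atTop

/-- Schmidt–Summerer upper exponent of the second type:
`Ψ̄_k(Λ, μ) = limsup_{s→+∞} S_k(Λ, sμ)/s`. -/
def PsiUp (d : ℕ) (Λ : Set (Fin d → ℝ)) (μ : Fin d → ℝ) (k : ℕ) : ℝ :=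
  limsup (fun s : ℝ => Sk d Λ (s • μ) k / s) atTop

/-- The system `|x|_σ ≤ t`, `|Θx − y|_ρ ≤ t^(−γ)` admits `k` linearly independent integer
solutions. -/
def solvK {m n : ℕ} (Θ : Matrix (Fin n) (Fin m) ℝ) (σ : Fin m → ℝ) (ρ : Fin n → ℝ)
    (k : ℕ) (γ t : ℝ) : Prop :=
  ∃ v : Fin k → (Fin m → ℤ) × (Fin n → ℤ), LinearIndependent ℤ v ∧
    ∀ l, wnorm σ (fun j => ((v l).1 j : ℝ)) ≤ t ∧
      wnorm ρ (fun i => Θ.mulVec (fun j => ((v l).1 j : ℝ)) i - ((v l).2 i : ℝ)) ≤ t ^ (-γ)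

/-- The `k`-th weighted Diophantine exponent `ω^(k)_{σ,ρ}(Θ)`. -/
def omegaK {m n : ℕ} (Θ : Matrix (Fin n) (Fin m) ℝ) (σ : Fin m → ℝ) (ρ : Fin n → ℝ)
    (k : ℕ) : EReal :=
  sSup (Real.toEReal '' {γ : ℝ | ∀ T : ℝ, ∃ t > T, solvK Θ σ ρ k γ t})

/-- The `k`-th weighted uniform Diophantine exponent `ω̂^(k)_{σ,ρ}(Θ)`. -/
def omegaHatK {m n : ℕ} (Θ : Matrix (Fin n) (Fin m) ℝ) (σ : Fin m → ℝ) (ρ : Fin n → ℝ)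
    (k : ℕ) : EReal :=
  sSup (Real.toEReal '' {γ : ℝ | ∃ T : ℝ, ∀ t > T, solvK Θ σ ρ k γ t})

/-
Let `L` be a lattice in `ℝ^d` and let `u ≠ 0` have integral scalar product with every point of `L`.
Minkowski's convex body theorem, applied to the forms `z ↦ u ⬝ᵥ z` and `z ↦ z i` for `i ≠ i₀`,
produces a nonzero `z ∈ L` with `|u ⬝ᵥ z| < 1`, hence `u ⬝ᵥ z = 0`, and with `z i` small for
`i ≠ i₀`. If `i₀` is a coordinate in which `u` is largest relative to the box, the relation
`u ⬝ᵥ z = 0` bounds the remaining coordinate `z i₀` as well. Thus `λ₁(B_τ, L)^(d - 1)` is at most a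
constant times `λ₁(B_{-τ}, L*)`; taking logarithms at `τ = s μ` and dividing by `s` makes the
constant disappear in the limit.
-/

section Minkowski

open MeasureTheory

theorem exists_ne_zero_mem_of_covolume_mul_two_pow_lt {E : Type*} [NormedAddCommGroup E]
    [NormedSpace ℝ E] [FiniteDimensional ℝ E] [MeasurableSpace E] [BorelSpace E] (μ : Measure E)
    [μ.IsAddHaarMeasure] (L : Submodule ℤ E) [DiscreteTopology L] [IsZLattice ℝ L] {s : Set E}
    (hsymm : ∀ x ∈ s, -x ∈ s) (hconv : Convex ℝ s)
    (h : ENNReal.ofReal (ZLattice.covolume L μ) * 2 ^ Module.finrank ℝ E < μ s) :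
    ∃ x ∈ L, x ≠ 0 ∧ x ∈ s := by
  let b := Module.Free.chooseBasis ℤ L
  have hfund := ZLattice.isAddFundamentalDomain b μ
  have hfin : μ (ZSpan.fundamentalDomain (b.ofZLatticeBasis ℝ)) ≠ ⊤ :=
    (ZSpan.fundamentalDomain_isBounded _).measure_lt_top.ne
  rw [ZLattice.covolume_eq_measure_fundamentalDomain L μ hfund, ofReal_measureReal hfin] at h
  have : Countable L.toAddSubgroup := inferInstanceAs (Countable L)
  obtain ⟨x, hx0, hxs⟩ := exists_ne_zero_mem_lattice_of_measure_mul_two_pow_lt_measure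
    (L := L.toAddSubgroup) hfund hsymm hconv h
  exact ⟨x, x.2, by simpa using hx0, hxs⟩

variable {ι : Type*} [Fintype ι] [DecidableEq ι]

theorem setOf_forall_abs_mulVec_lt (A : Matrix ι ι ℝ) (c : ι → ℝ) :
    {x : ι → ℝ | ∀ i, |A.mulVec x i| < c i} =
      A.toLin' ⁻¹' Set.univ.pi fun i => Set.Ioo (-c i) (c i) := by
  ext x
  simp [abs_lt]

theorem volume_setOf_forall_abs_mulVec_lt {A : Matrix ι ι ℝ} (hA : A.det ≠ 0) {c : ι → ℝ}
    (hc : ∀ i, 0 < c i) :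
    volume {x : ι → ℝ | ∀ i, |A.mulVec x i| < c i} =
      ENNReal.ofReal (|A.det|⁻¹ * ((∏ i, c i) * 2 ^ Fintype.card ι)) := by
  have hdet : LinearMap.det A.toLin' ≠ 0 := by rwa [LinearMap.det_toLin']
  have hlen : ∀ i, c i - -c i = c i * 2 := fun i => by ring
  rw [setOf_forall_abs_mulVec_lt, Measure.addHaar_preimage_linearMap _ hdet,
    LinearMap.det_toLin', abs_inv, Real.volume_pi_Ioo, ENNReal.ofReal_mul (by positivity)]
  simp only [hlen]
  rw [← ENNReal.ofReal_prod_of_nonneg fun i _ => (mul_pos (hc i) two_pos).le,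
    Finset.prod_mul_distrib, Finset.prod_const, Finset.card_univ]

theorem exists_ne_zero_forall_abs_mulVec_lt (L : Submodule ℤ (ι → ℝ)) [DiscreteTopology L]
    [IsZLattice ℝ L] {A : Matrix ι ι ℝ} (hA : A.det ≠ 0) {c : ι → ℝ} (hc : ∀ i, 0 < c i)
    (h : ZLattice.covolume L * |A.det| < ∏ i, c i) :
    ∃ x ∈ L, x ≠ 0 ∧ ∀ i, |A.mulVec x i| < c i := by
  refine exists_ne_zero_mem_of_covolume_mul_two_pow_lt volume L
    (s := {x | ∀ i, |A.mulVec x i| < c i}) (by simp [Matrix.mulVec_neg]) ?_ ?_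
  · rw [setOf_forall_abs_mulVec_lt]
    exact (convex_pi fun i _ => convex_Ioo _ _).linear_preimage _
  · have hcovol := ZLattice.covolume_pos L volume
    rw [volume_setOf_forall_abs_mulVec_lt hA hc, Module.finrank_fintype_fun_eq_card,
      ← ENNReal.ofReal_ofNat, ← ENNReal.ofReal_pow zero_le_two, ← ENNReal.ofReal_mul hcovol.le,
      ← mul_assoc, inv_mul_eq_div]
    have hdiv := (lt_div_iff₀ (abs_pos.2 hA)).2 h
    refine (ENNReal.ofReal_lt_ofReal_iff (mul_pos (hcovol.trans hdiv) (by positivity))).2 ?_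
    gcongr

end Minkowski

section Transference

variable {ι : Type*} [Fintype ι]

theorem det_one_updateRow [DecidableEq ι] (i : ι) (u : ι → ℝ) :
    ((1 : Matrix ι ι ℝ).updateRow i u).det = u i := by
  rw [← Matrix.cramer_transpose_apply, Matrix.transpose_one, Matrix.cramer_one,
    Module.End.one_apply]

theorem exists_ne_zero_dotProduct_eq_zero_forall_abs_lt (L : Submodule ℤ (ι → ℝ))
    [DiscreteTopology L] [IsZLattice ℝ L] {u c : ι → ℝ} (hu : ∀ v ∈ L, ∃ k : ℤ, u ⬝ᵥ v = k)
    {i₀ : ι} (hi₀ : u i₀ ≠ 0) (hc : ∀ i, 0 < c i)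
    (h : ZLattice.covolume L * (|u i₀| * c i₀) < ∏ i, c i) :
    ∃ z ∈ L, z ≠ 0 ∧ u ⬝ᵥ z = 0 ∧ ∀ i ≠ i₀, |z i| < c i := by
  classical
  let A : Matrix ι ι ℝ := (1 : Matrix ι ι ℝ).updateRow i₀ u
  have hdet : A.det = u i₀ := det_one_updateRow i₀ u
  have hprod : ∏ i, Function.update c i₀ 1 i = (∏ i, c i) / c i₀ := by
    rw [Finset.prod_update_of_mem (Finset.mem_univ i₀), one_mul, eq_div_iff (hc i₀).ne',
      Finset.sdiff_singleton_eq_erase, Finset.prod_erase_mul _ _ (Finset.mem_univ i₀)]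
  obtain ⟨z, hzL, hz0, hz⟩ := exists_ne_zero_forall_abs_mulVec_lt L (A := A)
    (c := Function.update c i₀ 1) (by rwa [hdet])
    (fun i => by rcases eq_or_ne i i₀ with rfl | hi <;> simp [*])
    (by rwa [hdet, hprod, lt_div_iff₀ (hc i₀), mul_assoc])
  refine ⟨z, hzL, hz0, ?_, fun i hi => ?_⟩
  · obtain ⟨k, hk⟩ := hu z hzL
    have hlt : |u ⬝ᵥ z| < 1 := by simpa [A, Matrix.mulVec] using hz i₀
    rw [hk] at hlt ⊢
    rw [Int.cast_eq_zero, ← Int.abs_lt_one_iff]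
    exact_mod_cast hlt
  · have hAi : A i = (1 : Matrix ι ι ℝ) i := Matrix.updateRow_ne hi
    have hrow : A.mulVec z i = z i := by
      rw [Matrix.mulVec, hAi]
      exact congrFun (Matrix.one_mulVec z) i
    simpa [hrow, hi] using hz i

theorem abs_le_card_sub_one_mul_of_dotProduct_eq_zero {u z c : ι → ℝ} {i₀ : ι} (hi₀ : u i₀ ≠ 0)
    (hmax : ∀ i, |u i| * c i ≤ |u i₀| * c i₀) (hdot : u ⬝ᵥ z = 0) (hz : ∀ i ≠ i₀, |z i| ≤ c i) :
    |z i₀| ≤ (Fintype.card ι - 1) * c i₀ := by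
  classical
  have hsplit : u i₀ * z i₀ = -∑ i ∈ Finset.univ.erase i₀, u i * z i := by
    rw [dotProduct, ← Finset.add_sum_erase _ _ (Finset.mem_univ i₀)] at hdot
    exact eq_neg_of_add_eq_zero_left hdot
  have hcard : (((Finset.univ.erase i₀).card : ℕ) : ℝ) = Fintype.card ι - 1 := by
    rw [Finset.card_erase_of_mem (Finset.mem_univ i₀), Finset.card_univ,
      Nat.cast_pred (Fintype.card_pos_iff.2 ⟨i₀⟩)]
  refine le_of_mul_le_mul_left ?_ (abs_pos.2 hi₀)
  calc |u i₀| * |z i₀| = |∑ i ∈ Finset.univ.erase i₀, u i * z i| := by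
        rw [← abs_mul, hsplit, abs_neg]
    _ ≤ ∑ i ∈ Finset.univ.erase i₀, |u i * z i| := Finset.abs_sum_le_sum_abs _ _
    _ ≤ ∑ _i ∈ Finset.univ.erase i₀, |u i₀| * c i₀ := by
        refine Finset.sum_le_sum fun i hi => ?_
        rw [abs_mul]
        exact (mul_le_mul_of_nonneg_left (hz i (Finset.ne_of_mem_erase hi)) (abs_nonneg _)).trans
          (hmax i)
    _ = |u i₀| * ((Fintype.card ι - 1) * c i₀) := by
        rw [Finset.sum_const, nsmul_eq_mul, hcard]
        ring

theorem exists_ne_zero_forall_abs_le_of_dual [Nontrivial ι] (L : Submodule ℤ (ι → ℝ))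
    [DiscreteTopology L] [IsZLattice ℝ L] {u c : ι → ℝ} (hu : ∀ v ∈ L, ∃ k : ℤ, u ⬝ᵥ v = k)
    (hu0 : u ≠ 0) (hc : ∀ i, 0 < c i)
    (h : ∀ i, ZLattice.covolume L * (|u i| * c i) < ∏ j, c j) :
    ∃ z ∈ L, z ≠ 0 ∧ ∀ i, |z i| ≤ (Fintype.card ι - 1) * c i := by
  obtain ⟨i₀, hmax⟩ := Finite.exists_max fun i => |u i| * c i
  obtain ⟨j, hj⟩ := Function.ne_iff.1 hu0
  have hi₀ : u i₀ ≠ 0 := by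
    have hpos := (mul_pos (abs_pos.2 hj) (hc j)).trans_le (hmax j)
    exact abs_pos.1 (pos_of_mul_pos_left hpos (hc i₀).le)
  obtain ⟨z, hzL, hz0, hdot, hz⟩ :=
    exists_ne_zero_dotProduct_eq_zero_forall_abs_lt L hu hi₀ hc (h i₀)
  refine ⟨z, hzL, hz0, fun i => ?_⟩
  rcases eq_or_ne i i₀ with rfl | hi
  · exact abs_le_card_sub_one_mul_of_dotProduct_eq_zero hi₀ hmax hdot fun j hj => (hz j hj).le
  · have hcard : (2 : ℝ) ≤ Fintype.card ι := by exact_mod_cast Fintype.one_lt_card (α := ι)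
    exact (hz i hi).le.trans (le_mul_of_one_le_left (hc i).le (by linarith))

end Transference

theorem exists_pos_forall_le_norm {E : Type*} [NormedAddCommGroup E] (L : Submodule ℤ E)
    [DiscreteTopology L] : ∃ r > 0, ∀ v ∈ L, v ≠ 0 → r ≤ ‖v‖ := by
  obtain ⟨r, hr, hball⟩ := Metric.exists_ball_inter_eq_singleton_of_mem_discrete
    (s := (L : Set E)) ⟨‹_›⟩ L.zero_mem
  refine ⟨r, hr, fun v hv hv0 => ?_⟩
  by_contra! hlt
  exact hv0 (hball.subset ⟨by simpa using hlt, hv⟩)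

theorem exists_mem_ne_zero_of_isZLattice {E : Type*} [NormedAddCommGroup E]
    [NormedSpace ℝ E] [Nontrivial E] (L : Submodule ℤ E) [DiscreteTopology L] [IsZLattice ℝ L] :
    ∃ v ∈ L, v ≠ 0 := by
  refine L.exists_mem_ne_zero_of_ne_bot ?_
  rintro rfl
  simpa using IsZLattice.span_top (K := ℝ) (L := (⊥ : Submodule ℤ E))

section FirstMinimum

variable {d : ℕ} {Λ : Set (Fin d → ℝ)} {τ : Fin d → ℝ}

theorem succMin_one_eq_sInf (Λ : Set (Fin d → ℝ)) (τ : Fin d → ℝ) :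
    succMin d Λ τ 1 =
      sInf {t : ℝ | 0 < t ∧ ∃ v ∈ Λ, v ≠ 0 ∧ ∀ i, |v i| ≤ t * Real.exp (τ i)} := by
  unfold succMin
  congr 1
  ext t
  refine and_congr_right fun _ => ⟨?_, ?_⟩
  · rintro ⟨v, hv, hind, hle⟩
    exact ⟨v 0, hv 0, hind.ne_zero 0, hle 0⟩
  · rintro ⟨v, hv, hv0, hle⟩
    exact ⟨fun _ => v, fun _ => hv, linearIndependent_unique_iff.2 hv0, fun _ => hle⟩

theorem abs_le_norm_mul_exp_norm_mul_exp (v τ : Fin d → ℝ) (i : Fin d) :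
    |v i| ≤ ‖v‖ * Real.exp ‖τ‖ * Real.exp (τ i) := by
  have hτ : -τ i ≤ ‖τ‖ := (neg_le_abs _).trans (norm_le_pi_norm τ i)
  rw [mul_assoc, ← Real.exp_add]
  exact (norm_le_pi_norm v i).trans
    (le_mul_of_one_le_right (norm_nonneg v) (Real.one_le_exp (by linarith)))

theorem succMin_one_le {v : Fin d → ℝ} (hv : v ∈ Λ) (hv0 : v ≠ 0) {t : ℝ}
    (hle : ∀ i, |v i| ≤ t * Real.exp (τ i)) : succMin d Λ τ 1 ≤ t := by
  obtain ⟨i, hi⟩ := Function.ne_iff.1 hv0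
  have ht : 0 < t := pos_of_mul_pos_left ((abs_pos.2 hi).trans_le (hle i)) (Real.exp_pos _).le
  rw [succMin_one_eq_sInf]
  exact csInf_le ⟨0, fun _ hx => hx.1.le⟩ ⟨ht, v, hv, hv0, hle⟩

theorem le_succMin_one (hΛ : ∃ v ∈ Λ, v ≠ 0) {a : ℝ}
    (h : ∀ t > 0, ∀ v ∈ Λ, v ≠ 0 → (∀ i, |v i| ≤ t * Real.exp (τ i)) → a ≤ t) :
    a ≤ succMin d Λ τ 1 := by
  obtain ⟨w, hw, hw0⟩ := hΛ
  rw [succMin_one_eq_sInf]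
  refine le_csInf ⟨‖w‖ * Real.exp ‖τ‖, mul_pos (norm_pos_iff.2 hw0) (Real.exp_pos _), w, hw, hw0,
    abs_le_norm_mul_exp_norm_mul_exp w τ⟩ ?_
  rintro t ⟨ht, v, hv, hv0, hle⟩
  exact h t ht v hv hv0 hle

theorem succMin_one_le_norm_mul_exp_norm {v : Fin d → ℝ} (hv : v ∈ Λ) (hv0 : v ≠ 0)
    (τ : Fin d → ℝ) : succMin d Λ τ 1 ≤ ‖v‖ * Real.exp ‖τ‖ :=
  succMin_one_le hv hv0 (abs_le_norm_mul_exp_norm_mul_exp v τ)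

theorem mul_exp_neg_norm_le_succMin_one (hΛ : ∃ v ∈ Λ, v ≠ 0) {r : ℝ}
    (hr : ∀ v ∈ Λ, v ≠ 0 → r ≤ ‖v‖) (τ : Fin d → ℝ) :
    r * Real.exp (-‖τ‖) ≤ succMin d Λ τ 1 := by
  refine le_succMin_one hΛ fun t ht v hv hv0 hle => ?_
  rw [Real.exp_neg, ← div_eq_mul_inv, div_le_iff₀ (Real.exp_pos _)]
  refine (hr v hv hv0).trans ((pi_norm_le_iff_of_nonneg (by positivity)).2 fun i => ?_)
  have hτ : τ i ≤ ‖τ‖ := (le_abs_self _).trans (norm_le_pi_norm τ i)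
  exact (hle i).trans (by gcongr)

theorem Lk_one_le (hpos : 0 < succMin d Λ τ 1) {v : Fin d → ℝ} (hv : v ∈ Λ) (hv0 : v ≠ 0) :
    Lk d Λ τ 1 ≤ Real.log ‖v‖ + ‖τ‖ := by
  have hlog := Real.log_le_log hpos (succMin_one_le_norm_mul_exp_norm hv hv0 τ)
  rwa [Real.log_mul (norm_ne_zero_iff.2 hv0) (Real.exp_ne_zero _), Real.log_exp] at hlog

theorem le_Lk_one (hΛ : ∃ v ∈ Λ, v ≠ 0) {r : ℝ} (hr0 : 0 < r)
    (hr : ∀ v ∈ Λ, v ≠ 0 → r ≤ ‖v‖) (τ : Fin d → ℝ) : Real.log r - ‖τ‖ ≤ Lk d Λ τ 1 := by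
  have hlog := Real.log_le_log (by positivity) (mul_exp_neg_norm_le_succMin_one hΛ hr τ)
  rwa [Real.log_mul hr0.ne' (Real.exp_ne_zero _), Real.log_exp, ← sub_eq_add_neg] at hlog

end FirstMinimum

section DualLattice

variable {d : ℕ} (L : Submodule ℤ (Fin d → ℝ)) [DiscreteTopology L] [IsZLattice ℝ L]
  {Λ' : Set (Fin d → ℝ)} {τ : Fin d → ℝ}

theorem succMin_one_pos [NeZero d] (τ : Fin d → ℝ) : 0 < succMin d L τ 1 := by
  obtain ⟨r, hr0, hr⟩ := exists_pos_forall_le_norm L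
  exact (mul_pos hr0 (Real.exp_pos _)).trans_le
    (mul_exp_neg_norm_le_succMin_one (exists_mem_ne_zero_of_isZLattice L) hr τ)

theorem succMin_one_le_of_dual (hd : 2 ≤ d) (hτ : ∑ i, τ i = 0) {u : Fin d → ℝ}
    (hu : ∀ v ∈ L, ∃ k : ℤ, u ⬝ᵥ v = k) (hu0 : u ≠ 0) {t R : ℝ} (hR : 0 < R)
    (hle : ∀ i, |u i| ≤ t * Real.exp (-τ i)) (htR : ZLattice.covolume L * t < R ^ (d - 1)) :
    succMin d L τ 1 ≤ (d - 1) * R := by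
  have : Nontrivial (Fin d) := Fin.nontrivial_iff_two_le.2 hd
  have hprod : ∏ i, R * Real.exp (τ i) = R ^ (d - 1) * R := by
    rw [Finset.prod_mul_distrib, ← Real.exp_sum, hτ, Real.exp_zero, Finset.prod_const,
      Finset.card_univ, Fintype.card_fin, mul_one, pow_sub_one_mul (by lia)]
  obtain ⟨z, hzL, hz0, hz⟩ := exists_ne_zero_forall_abs_le_of_dual L hu hu0
    (c := fun i => R * Real.exp (τ i)) (fun i => by positivity) fun i => by
      have hcovol := ZLattice.covolume_pos L MeasureTheory.volume
      calc ZLattice.covolume L * (|u i| * (R * Real.exp (τ i)))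
          ≤ ZLattice.covolume L * (t * Real.exp (-τ i) * (R * Real.exp (τ i))) := by
            gcongr
            exact hle i
        _ = ZLattice.covolume L * t * R := by
            rw [Real.exp_neg]
            field_simp
        _ < ∏ j, R * Real.exp (τ j) := by
            rw [hprod]
            gcongr
  refine succMin_one_le hzL hz0 fun i => ?_
  simpa [mul_assoc] using hz i

theorem succMin_one_transference (hd : 2 ≤ d) (hτ : ∑ i, τ i = 0)
    (hdual : ∀ u ∈ Λ', ∀ v ∈ L, ∃ k : ℤ, u ⬝ᵥ v = k) (hΛ' : ∃ u ∈ Λ', u ≠ 0) :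
    (succMin d L τ 1 / d) ^ (d - 1) / ZLattice.covolume L ≤ succMin d Λ' (-τ) 1 := by
  have : NeZero d := ⟨by lia⟩
  have hpos := succMin_one_pos L τ
  have hd0 : (0 : ℝ) < d := by exact_mod_cast Nat.pos_of_neZero d
  refine le_succMin_one hΛ' fun t _ u hu hu0 hle => ?_
  rw [div_le_iff₀' (ZLattice.covolume_pos L MeasureTheory.volume)]
  by_contra! hlt
  have hbound := succMin_one_le_of_dual L hd hτ (hdual u hu) hu0 (by positivity) hle hlt
  rw [sub_one_mul, mul_div_cancel₀ _ hd0.ne'] at hbound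
  linarith [div_pos hpos hd0]

theorem succMin_one_pos_of_dual (hd : 2 ≤ d) (hτ : ∑ i, τ i = 0)
    (hdual : ∀ u ∈ Λ', ∀ v ∈ L, ∃ k : ℤ, u ⬝ᵥ v = k) (hΛ' : ∃ u ∈ Λ', u ≠ 0) :
    0 < succMin d Λ' (-τ) 1 := by
  have : NeZero d := ⟨by lia⟩
  have := succMin_one_pos L τ
  have := ZLattice.covolume_pos L MeasureTheory.volume
  have : (0 : ℝ) < d := by exact_mod_cast Nat.pos_of_neZero d
  exact lt_of_lt_of_le (by positivity) (succMin_one_transference L hd hτ hdual hΛ')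

theorem Lk_one_transference (hd : 2 ≤ d) (hτ : ∑ i, τ i = 0)
    (hdual : ∀ u ∈ Λ', ∀ v ∈ L, ∃ k : ℤ, u ⬝ᵥ v = k) (hΛ' : ∃ u ∈ Λ', u ≠ 0) :
    (d - 1) * Lk d L τ 1 ≤
      Lk d Λ' (-τ) 1 + ((d - 1) * Real.log d + Real.log (ZLattice.covolume L)) := by
  have : NeZero d := ⟨by lia⟩
  have hpos := succMin_one_pos L τ
  have hcovol := ZLattice.covolume_pos L MeasureTheory.volume
  have hd0 : (0 : ℝ) < d := by exact_mod_cast Nat.pos_of_neZero d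
  have hlog := Real.log_le_log (by positivity) (succMin_one_transference L hd hτ hdual hΛ')
  rw [Real.log_div (by positivity) hcovol.ne', Real.log_pow, Real.log_div hpos.ne' hd0.ne',
    Nat.cast_pred (Nat.pos_of_neZero d)] at hlog
  unfold Lk
  linarith

end DualLattice

section Liminf

open Topology

theorem tendsto_add_mul_div_atTop (a b : ℝ) :
    Tendsto (fun s : ℝ => (a + s * b) / s) atTop (𝓝 b) := by
  have hlim : Tendsto (fun s : ℝ => a / s + b) atTop (𝓝 (0 + b)) :=
    (tendsto_const_nhds.div_atTop tendsto_id).add_const b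
  rw [zero_add] at hlim
  refine hlim.congr' ?_
  filter_upwards [eventually_ne_atTop 0] with s hs
  field_simp

theorem liminf_div_le_liminf_div_div {f g : ℝ → ℝ} {k C : ℝ} (hk : 0 < k)
    (hfg : ∀ᶠ s in atTop, k * f s ≤ g s + C)
    (hf : IsBoundedUnder (· ≥ ·) atTop fun s => f s / s)
    (hg : IsCoboundedUnder (· ≥ ·) atTop fun s => g s / s) :
    liminf (fun s => f s / s) atTop ≤ liminf (fun s => g s / s) atTop / k := by
  refine le_of_forall_lt_imp_le_of_dense fun a ha => ?_
  obtain ⟨b, hab, hb⟩ := exists_between ha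
  have hC : ∀ᶠ s : ℝ in atTop, C / s < k * (b - a) :=
    (tendsto_const_nhds.div_atTop tendsto_id).eventually_lt_const
      (mul_pos hk (sub_pos.2 hab))
  rw [le_div_iff₀' hk]
  refine le_liminf_of_le hg ?_
  filter_upwards [eventually_lt_of_lt_liminf hb hf, hC, hfg, eventually_gt_atTop 0]
    with s hbs hCs hfgs hs
  have hdiv : k * (f s / s) ≤ g s / s + C / s := by
    rw [← mul_div_assoc, ← add_div]
    exact div_le_div_of_nonneg_right hfgs hs.le
  have hkb : k * b ≤ k * (f s / s) := mul_le_mul_of_nonneg_left hbs.le hk.le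
  linarith

end Liminf

theorem PsiLow_one (d : ℕ) (Λ : Set (Fin d → ℝ)) (μ : Fin d → ℝ) :
    PsiLow d Λ μ 1 = liminf (fun s : ℝ => Lk d Λ (s • μ) 1 / s) atTop := by
  simp [PsiLow, Sk]

section Exponents

variable {d : ℕ} {Λ : Set (Fin d → ℝ)}

theorem isBoundedUnder_ge_Lk_one_div [NeZero d] (L : Submodule ℤ (Fin d → ℝ))
    [DiscreteTopology L] [IsZLattice ℝ L] (μ : Fin d → ℝ) :
    IsBoundedUnder (· ≥ ·) atTop fun s : ℝ => Lk d L (s • μ) 1 / s := by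
  obtain ⟨r, hr0, hr⟩ := exists_pos_forall_le_norm L
  refine (tendsto_add_mul_div_atTop (Real.log r) (-‖μ‖)).isBoundedUnder_ge.mono_ge ?_
  filter_upwards [eventually_gt_atTop 0] with s hs
  have hle := le_Lk_one (exists_mem_ne_zero_of_isZLattice L) hr0 hr (s • μ)
  rw [norm_smul_of_nonneg hs.le, sub_eq_add_neg, ← mul_neg] at hle
  exact div_le_div_of_nonneg_right hle hs.le

theorem isCoboundedUnder_ge_Lk_one_div (hΛ : ∃ v ∈ Λ, v ≠ 0) {μ : Fin d → ℝ}
    (hpos : ∀ᶠ s : ℝ in atTop, 0 < succMin d Λ (s • μ) 1) :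
    IsCoboundedUnder (· ≥ ·) atTop fun s : ℝ => Lk d Λ (s • μ) 1 / s := by
  obtain ⟨v, hv, hv0⟩ := hΛ
  refine IsBoundedUnder.isCoboundedUnder_ge
    ((tendsto_add_mul_div_atTop (Real.log ‖v‖) ‖μ‖).isBoundedUnder_le.mono_le ?_)
  filter_upwards [hpos, eventually_gt_atTop 0] with s hpos hs
  have hle := Lk_one_le hpos hv hv0
  rw [norm_smul_of_nonneg hs.le] at hle
  exact div_le_div_of_nonneg_right hle hs.le

end Exponents

theorem stmt11_general {d : ℕ} (hd : 2 ≤ d) (L : Submodule ℤ (Fin d → ℝ)) [DiscreteTopology L]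
    [IsZLattice ℝ L] (Λ' : Set (Fin d → ℝ)) (hdual : ∀ u ∈ Λ', ∀ v ∈ L, ∃ k : ℤ, u ⬝ᵥ v = k)
    (hΛ' : ∃ u ∈ Λ', u ≠ 0) (μ : Fin d → ℝ) (hμ : ∑ i, μ i = 0) :
    PsiLow d L μ 1 ≤ PsiLow d Λ' (-μ) 1 / (d - 1) := by
  have : NeZero d := ⟨by lia⟩
  have hd1 : (0 : ℝ) < d - 1 := sub_pos.2 (by exact_mod_cast hd)
  have hsum (s : ℝ) : ∑ i, (s • μ) i = 0 := by simp [← Finset.mul_sum, hμ]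
  have htrans (s : ℝ) := Lk_one_transference L hd (hsum s) hdual hΛ'
  have hpos (s : ℝ) := succMin_one_pos_of_dual L hd (hsum s) hdual hΛ'
  simp only [← smul_neg] at htrans hpos
  rw [PsiLow_one, PsiLow_one]
  exact liminf_div_le_liminf_div_div hd1 (.of_forall htrans) (isBoundedUnder_ge_Lk_one_div L μ)
    (isCoboundedUnder_ge_Lk_one_div hΛ' (.of_forall hpos))

section LinearForms

open Matrix

variable {m n : ℕ}

/-- The coordinates of `v ∈ ℝ^(m+n)` in the basis of `Λ(Θ)` given by the columns of
`(1, 0; -Θ, 1)`; the lattice `Λ(Θ)` consists of the vectors whose coordinates are integers. -/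
def lattCoords (Θ : Matrix (Fin n) (Fin m) ℝ) :
    (Fin (m + n) → ℝ) ≃ₗ[ℝ] (Fin m ⊕ Fin n → ℝ) where
  toFun v := Sum.elim (v ∘ Fin.castAdd n) (v ∘ Fin.natAdd m + Θ *ᵥ (v ∘ Fin.castAdd n))
  invFun w := Fin.append (w ∘ Sum.inl) (w ∘ Sum.inr - Θ *ᵥ (w ∘ Sum.inl))
  map_add' v w := by
    ext (j | i)
    · rfl
    · have hcast : (v + w) ∘ Fin.castAdd n = v ∘ Fin.castAdd n + w ∘ Fin.castAdd n := rfl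
      simp only [Sum.elim_inr, Pi.add_apply, Function.comp_apply, hcast, mulVec_add]
      ring
  map_smul' a v := by
    ext (j | i)
    · rfl
    · have hcast : (a • v) ∘ Fin.castAdd n = a • (v ∘ Fin.castAdd n) := rfl
      simp only [Sum.elim_inr, Pi.add_apply, Pi.smul_apply, Function.comp_apply, hcast,
        mulVec_smul, smul_add, RingHom.id_apply]
  left_inv v := by
    ext i
    refine Fin.addCases (fun j => ?_) (fun i => ?_) i <;> simp
  right_inv w := by
    have hcast : Fin.append (w ∘ Sum.inl) (w ∘ Sum.inr - Θ *ᵥ (w ∘ Sum.inl)) ∘ Fin.castAdd n =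
        w ∘ Sum.inl := by
      ext j
      simp
    ext (j | i) <;> simp [hcast]

/-- The lattice `Λ(Θ)` as a `ℤ`-submodule of `ℝ^(m+n)`, so that the theory of `ℤ`-lattices
applies to it. -/
abbrev lattSubmodule (Θ : Matrix (Fin n) (Fin m) ℝ) : Submodule ℤ (Fin (m + n) → ℝ) :=
  Submodule.span ℤ (Set.range (Module.Basis.ofEquivFun (lattCoords Θ)))

theorem coe_lattSubmodule (Θ : Matrix (Fin n) (Fin m) ℝ) :
    (lattSubmodule Θ : Set (Fin (m + n) → ℝ)) = latt m n Θ := by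
  ext v
  rw [SetLike.mem_coe, Module.Basis.mem_span_iff_repr_mem]
  simp only [← Module.Basis.equivFun_apply, Module.Basis.equivFun_ofEquivFun]
  constructor
  · intro h
    choose z hz using h
    have hcoords : lattCoords Θ v = fun i => (z i : ℝ) := (funext hz).symm
    refine ⟨z ∘ Sum.inl, z ∘ Sum.inr, ?_⟩
    rw [← (lattCoords Θ).symm_apply_apply v, hcoords]
    rfl
  · rintro ⟨x, y, rfl⟩ i
    let z : Fin m ⊕ Fin n → ℤ := Sum.elim x y
    have hcoords := (lattCoords Θ).apply_symm_apply fun i => (z i : ℝ)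
    exact ⟨z i, (congrFun hcoords i).symm⟩

theorem dotProduct_append_transpose_mulVec (Θ : Matrix (Fin n) (Fin m) ℝ) (p x : Fin m → ℝ)
    (q y : Fin n → ℝ) :
    Fin.append (p + Θᵀ *ᵥ q) q ⬝ᵥ Fin.append x (y - Θ *ᵥ x) = p ⬝ᵥ x + q ⬝ᵥ y := by
  have hadj : (Θᵀ *ᵥ q) ⬝ᵥ x = q ⬝ᵥ (Θ *ᵥ x) := by
    rw [mulVec_transpose, dotProduct_mulVec]
  rw [dotProduct, Fin.sum_univ_add]
  simp only [Fin.append_left, Fin.append_right]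
  rw [← dotProduct, ← dotProduct, add_dotProduct, dotProduct_sub, hadj]
  ring

theorem exists_int_dotProduct_eq {Θ : Matrix (Fin n) (Fin m) ℝ} {u v : Fin (m + n) → ℝ}
    (hu : u ∈ lattDual m n Θ) (hv : v ∈ latt m n Θ) : ∃ k : ℤ, u ⬝ᵥ v = k := by
  obtain ⟨p, q, rfl⟩ := hu
  obtain ⟨x, y, rfl⟩ := hv
  refine ⟨p ⬝ᵥ x + q ⬝ᵥ y, (dotProduct_append_transpose_mulVec Θ _ _ _ _).trans ?_⟩
  simp [dotProduct]

theorem exists_mem_lattDual_ne_zero (Θ : Matrix (Fin n) (Fin (m + 1)) ℝ) :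
    ∃ u ∈ lattDual (m + 1) n Θ, u ≠ 0 := by
  refine ⟨_, ⟨1, 0, rfl⟩, fun h => ?_⟩
  simpa [mulVec, dotProduct] using congrFun h (Fin.castAdd n 0)

theorem sum_eOne {σ : Fin m → ℝ} (hσ : ∑ j, σ j = 1) : ∑ i, eOne m n σ i = 0 := by
  simp [eOne, Fin.sum_univ_add, ← Finset.mul_sum, hσ]

theorem sum_eTwo {ρ : Fin n → ℝ} (hρ : ∑ i, ρ i = 1) : ∑ i, eTwo m n ρ i = 0 := by
  have hrev : ∑ i : Fin n, ρ i.rev = 1 := (Equiv.sum_comp Fin.revPerm ρ).trans hρ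
  simp [eTwo, Fin.sum_univ_add, ← Finset.mul_sum, hrev]

theorem sum_muGamma {σ : Fin m → ℝ} {ρ : Fin n → ℝ} (hσ : ∑ j, σ j = 1) (hρ : ∑ i, ρ i = 1)
    (γ : ℝ) : ∑ i, muGamma m n σ ρ γ i = 0 := by
  simp [muGamma, Finset.sum_add_distrib, ← Finset.mul_sum, sum_eOne hσ, sum_eTwo hρ]

end LinearForms

theorem stmt11 {m n : ℕ} (Θ : Matrix (Fin (n + 1)) (Fin (m + 1)) ℝ)
    (σ : Fin (m + 1) → ℝ) (ρ : Fin (n + 1) → ℝ)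
    (hσa : Antitone σ) (hρa : Antitone ρ)
    (hσp : ∀ j, 0 < σ j) (hρp : ∀ i, 0 < ρ i)
    (hσs : ∑ j, σ j = 1) (hρs : ∑ i, ρ i = 1)
    (γ : ℝ) :
    PsiLow (m + 1 + (n + 1)) (latt (m + 1) (n + 1) Θ) (muGamma (m + 1) (n + 1) σ ρ γ) 1 ≤
      PsiLow (m + 1 + (n + 1)) (lattDual (m + 1) (n + 1) Θ)
        (-muGamma (m + 1) (n + 1) σ ρ γ) 1 / ((m + 1 + (n + 1) : ℕ) - 1 : ℝ) := by
  rw [← coe_lattSubmodule]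
  exact stmt11_general (by lia) (lattSubmodule Θ) _ (fun u hu v hv => exists_int_dotProduct_eq hu
    (coe_lattSubmodule Θ ▸ hv)) (exists_mem_lattDual_ne_zero Θ) _ (sum_muGamma hσs hρs γ)
end
end
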